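/- There exists a universal constant C > 0 such that the following holds for all positive integers n and d ≥ 2. Given symmetric matrices A_1, ..., A_n ∈ ℝ^{d×d}, let X = ∑_{i=1}^n g_i A_i where g_1, ..., g_n are i.i.d. standard Gaussian random variables. Then 𝔼[‖X‖_op] ≤ C · (σ(X) + (log d)^{3/2} · v(X)). -/

import Mathlib

open MeasureTheory ProbabilityTheory

/-- Operator norm (largest singular value) of a real matrix, as the norm of the
induced linear map between Euclidean spaces. -/
noncomputable def opNorm {m n : Type*} [Fintype m] [Fintype n] [DecidableEq n]
    (M : Matrix m n ℝ) : ℝ :=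
  ‖LinearMap.toContinuousLinearMap (Matrix.toEuclideanLin M)‖

/-- Squared Frobenius norm of a real matrix. -/
noncomputable def frobNormSq {m n : Type*} [Fintype m] [Fintype n]
    (M : Matrix m n ℝ) : ℝ := ∑ i, ∑ j, (M i j) ^ 2

/-- Product of `n` standard Gaussian measures on `ℝ`. -/
noncomputable def gaussianPi (n : ℕ) : Measure (Fin n → ℝ) :=
  Measure.pi fun _ => gaussianReal 0 1

/-- `σ(X)` for `X = ∑ g i • A i`: square root of the operator norm of `∑ A i ^ 2`. -/
noncomputable def sigmaX {n d : ℕ} (A : Fin n → Matrix (Fin d) (Fin d) ℝ) : ℝ :=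
  Real.sqrt (opNorm (∑ i, A i * A i))

/-- Covariance matrix `Cov(X) = ∑ vec(A i) vec(A i)ᵀ`, indexed by pairs of entries. -/
noncomputable def covX {n d : ℕ} (A : Fin n → Matrix (Fin d) (Fin d) ℝ) :
    Matrix (Fin d × Fin d) (Fin d × Fin d) ℝ :=
  ∑ i, Matrix.of fun p q => A i p.1 p.2 * A i q.1 q.2

/-- `v(X)`: square root of the operator norm of `Cov(X)`. -/
noncomputable def vX {n d : ℕ} (A : Fin n → Matrix (Fin d) (Fin d) ℝ) : ℝ :=
  Real.sqrt (opNorm (covX A))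

section PartFile1
open MeasureTheory ProbabilityTheory

/-- standard Gaussian product measure -/
noncomputable def gpi (κ : Type) [Fintype κ] : Measure (κ → ℝ) :=
  Measure.pi fun _ => gaussianReal 0 1

instance gpi_prob (κ : Type) [Fintype κ] : IsProbabilityMeasure (gpi κ) := by
  unfold gpi; infer_instance

lemma integrable_pow_gauss (n : ℕ) : Integrable (fun x : ℝ => x ^ n) (gaussianReal 0 1) := by
  have h := memLp_id_gaussianReal (μ := 0) (v := 1) (n : NNReal)
  have := h.integrable_norm_pow' 
  have h2 : Integrable (fun x : ℝ => ‖x‖ ^ n) (gaussianReal 0 1) := by simpa using this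
  refine h2.mono' (by fun_prop) ?_
  filter_upwards with x
  simp

noncomputable def gmom (n : ℕ) : ℝ := ∫ x, x ^ n ∂(gaussianReal 0 1)

lemma integrable_pow_pdf (n : ℕ) : Integrable (fun x : ℝ => gaussianPDFReal 0 1 x * x ^ n) := by
  have h := integrable_pow_gauss n
  rw [gaussianReal_of_var_ne_zero _ one_ne_zero,
    integrable_withDensity_iff_integrable_smul₀' (by fun_prop) (by simp [gaussianPDF])] at h
  simpa [toReal_gaussianPDF] using h

lemma gmom_eq (n : ℕ) : gmom n = ∫ x, gaussianPDFReal 0 1 x * x ^ n := by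
  unfold gmom
  rw [integral_gaussianReal_eq_integral_smul one_ne_zero]
  simp

lemma hasDerivAt_pdf (x : ℝ) :
    HasDerivAt (gaussianPDFReal 0 1) (-(x * gaussianPDFReal 0 1 x)) x := by
  have h : HasDerivAt (fun x : ℝ => (√(2 * Real.pi * 1))⁻¹ * Real.exp (-(x - 0) ^ 2 / (2 * 1)))
      (-(x * ((√(2 * Real.pi * 1))⁻¹ * Real.exp (-(x - 0) ^ 2 / (2 * 1))))) x := by
    have h1 : HasDerivAt (fun x : ℝ => -(x - 0) ^ 2 / (2 * 1)) (-x) x := by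
      have := (((hasDerivAt_id' x).sub_const 0).fun_pow 2).fun_neg.div_const (2 * 1 : ℝ)
      refine this.congr_deriv ?_
      simp; ring
    have := (h1.exp).const_mul ((√(2 * Real.pi * 1))⁻¹)
    refine this.congr_deriv ?_
    ring
  unfold gaussianPDFReal
  simpa using h

lemma gmom_succ (n : ℕ) : gmom (n + 1) = n * gmom (n - 1) := by
  have h0 : ∫ x : ℝ, (gaussianPDFReal 0 1 x * (n * x ^ (n - 1)) -
      gaussianPDFReal 0 1 x * x ^ (n + 1)) = 0 := by
    refine integral_eq_zero_of_hasDerivAt_of_integrable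
      (f := fun x => gaussianPDFReal 0 1 x * x ^ n) ?_ ?_ (integrable_pow_pdf n)
    · intro x
      have := (hasDerivAt_pdf x).fun_mul (hasDerivAt_pow n x)
      refine this.congr_deriv ?_
      ring
    · refine Integrable.sub ?_ (integrable_pow_pdf _)
      have := (integrable_pow_pdf (n - 1)).const_mul (n : ℝ)
      refine this.congr ?_
      filter_upwards with x
      ring
  rw [integral_sub] at h0
  · rw [gmom_eq, gmom_eq, ← integral_const_mul]
    have : ∀ x : ℝ, (n : ℝ) * (gaussianPDFReal 0 1 x * x ^ (n - 1)) =
      gaussianPDFReal 0 1 x * (n * x ^ (n - 1)) := fun x => by ring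
    simp only [this]
    linarith
  · have := (integrable_pow_pdf (n - 1)).const_mul (n : ℝ)
    refine this.congr ?_
    filter_upwards with x
    ring
  · exact integrable_pow_pdf _

set_option linter.unusedSectionVars false
set_option linter.unusedSimpArgs false
section
variable {κ : Type} [Fintype κ] [DecidableEq κ]

/-- evaluation point -/
def evp (g : κ → ℝ) (w : Bool → ℝ) : κ ⊕ Bool → ℝ := Sum.elim g w

lemma eval_monomial_evp (g : κ → ℝ) (w : Bool → ℝ) (u : (κ ⊕ Bool) →₀ ℕ) (a : ℝ) :
    MvPolynomial.eval (evp g w) (MvPolynomial.monomial u a) =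
      (a * ∏ b, w b ^ u (Sum.inr b)) * ∏ k, g k ^ u (Sum.inl k) := by
  rw [MvPolynomial.eval_monomial, Finsupp.prod_fintype _ _ (by simp), Fintype.prod_sum_type]
  simp only [evp, Sum.elim_inl, Sum.elim_inr]
  ring

lemma integrable_eval_evp (w : Bool → ℝ) (p : MvPolynomial (κ ⊕ Bool) ℝ) :
    Integrable (fun g => MvPolynomial.eval (evp g w) p) (gpi κ) := by
  induction p using MvPolynomial.induction_on' with
  | monomial u a =>
    simp only [eval_monomial_evp]
    refine Integrable.const_mul ?_ _
    exact Integrable.fintype_prod (f := fun k x => x ^ u (Sum.inl k))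
      (fun k => integrable_pow_gauss _)
  | add p q hp hq => 
    simp only [map_add]
    exact hp.add hq

noncomputable def EE (w : Bool → ℝ) : MvPolynomial (κ ⊕ Bool) ℝ →ₗ[ℝ] ℝ where
  toFun p := ∫ g, MvPolynomial.eval (evp g w) p ∂(gpi κ)
  map_add' p q := by
    simp only [map_add]
    exact integral_add (integrable_eval_evp w p) (integrable_eval_evp w q)
  map_smul' c p := by
    simp only [MvPolynomial.smul_eval, RingHom.id_apply, smul_eq_mul]
    exact integral_const_mul _ _

lemma EE_apply (w : Bool → ℝ) (p : MvPolynomial (κ ⊕ Bool) ℝ) :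
    EE w p = ∫ g, MvPolynomial.eval (evp g w) p ∂(gpi κ) := rfl

lemma EE_monomial (w : Bool → ℝ) (u : (κ ⊕ Bool) →₀ ℕ) (a : ℝ) :
    EE w (MvPolynomial.monomial u a) =
      (a * ∏ b, w b ^ u (Sum.inr b)) * ∏ k, gmom (u (Sum.inl k)) := by
  rw [EE_apply]
  simp only [eval_monomial_evp]
  rw [integral_const_mul]
  congr 1
  exact integral_fintype_prod_eq_prod (f := fun k (x : ℝ) => x ^ u (Sum.inl k))

lemma EE_ibp (w : Bool → ℝ) (k : κ) (p : MvPolynomial (κ ⊕ Bool) ℝ) :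
    EE w (MvPolynomial.X (Sum.inl k) * p) = EE w (MvPolynomial.pderiv (Sum.inl k) p) := by
  induction p using MvPolynomial.induction_on' with
  | monomial u a =>
    rw [MvPolynomial.pderiv_monomial, mul_comm, MvPolynomial.X, MvPolynomial.monomial_mul,
      EE_monomial, EE_monomial, ← Finset.mul_prod_erase _ _ (Finset.mem_univ k),
      ← Finset.mul_prod_erase _ (fun j => gmom _) (Finset.mem_univ k)]
    have h1 : ∏ x ∈ Finset.univ.erase k, gmom ((u + fun₀ | Sum.inl k => 1) (Sum.inl x)) =
      ∏ x ∈ Finset.univ.erase k, gmom ((u - fun₀ | Sum.inl k => 1) (Sum.inl x)) := by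
      refine Finset.prod_congr rfl fun x hx => ?_
      have hx' : x ≠ k := Finset.ne_of_mem_erase hx
      simp [Finsupp.single_apply, hx'.symm]
    rw [h1]
    simp [gmom_succ]
    ring
  | add p q hp hq => simp only [mul_add, map_add, hp, hq]

noncomputable def cs (θ : ℝ) : Bool → ℝ := fun b => cond b (Real.sin θ) (Real.cos θ)

/-- derivation -s ∂_c + c ∂_s -/
noncomputable def Dth : Derivation ℝ (MvPolynomial (κ ⊕ Bool) ℝ) (MvPolynomial (κ ⊕ Bool) ℝ) :=
  (MvPolynomial.X (Sum.inr false) : MvPolynomial (κ ⊕ Bool) ℝ) • MvPolynomial.pderiv (Sum.inr true)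
  - (MvPolynomial.X (Sum.inr true) : MvPolynomial (κ ⊕ Bool) ℝ) • MvPolynomial.pderiv (Sum.inr false)

lemma hasDerivAt_EE (p : MvPolynomial (κ ⊕ Bool) ℝ) (θ : ℝ) :
    HasDerivAt (fun t => EE (cs t) p) (EE (cs θ) (Dth p)) θ := by
  induction p using MvPolynomial.induction_on' with
  | monomial u a =>
    simp only [EE_monomial, Dth, Derivation.sub_apply, Derivation.smul_apply, smul_eq_mul,
      MvPolynomial.pderiv_monomial, mul_comm (MvPolynomial.X _), MvPolynomial.X,
      MvPolynomial.monomial_mul, map_sub, Fintype.prod_bool, cs, cond_true, cond_false]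
    have h := (((Real.hasDerivAt_sin θ).fun_pow (u (Sum.inr true))).fun_mul
      ((Real.hasDerivAt_cos θ).fun_pow (u (Sum.inr false)))).const_mul a |>.mul_const
        (∏ k, gmom (u (Sum.inl k)))
    refine h.congr_deriv ?_
    simp [Finsupp.single_apply]
    ring
  | add p q hp hq => 
    simp only [map_add]
    exact hp.add hq
end
end PartFile1

section PartFile2
open MeasureTheory ProbabilityTheory

lemma gpi_map_inj {I K : Type} [Fintype I] [Fintype K] (f : I → K) (hf : Function.Injective f) :
    MeasurePreserving (fun (g : K → ℝ) i => g (f i)) (gpi K) (gpi I) := by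
  refine ⟨by fun_prop, ?_⟩
  have h := (iIndepFun_pi (μ := fun _ : K => gaussianReal 0 1) (X := fun _ x => x)
    (fun i => by fun_prop)).precomp hf
  rw [iIndepFun_iff_map_fun_eq_pi_map (fun i => (measurable_pi_apply (f i)).aemeasurable)] at h
  unfold gpi
  rw [h]
  congr 1
  ext1 i
  exact (measurePreserving_eval (μ := fun _ : K => gaussianReal 0 1) (f i)).map_eq

lemma gpi_map_sign {K : Type} [Fintype K] (s : K → ℝ) (hs : ∀ k, s k = 1 ∨ s k = -1) :
    MeasurePreserving (fun (g : K → ℝ) k => s k * g k) (gpi K) (gpi K) := by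
  unfold gpi
  refine measurePreserving_pi (f := fun k x => s k * x) _ _ fun k => ⟨by fun_prop, ?_⟩
  rw [gaussianReal_map_const_mul]
  rcases hs k with h | h <;> simp [h] 

lemma gpi_indep {I K : Type} [Fintype I] [Fintype K] (f : (I → ℝ) → ℝ) (h : (K → ℝ) → ℝ) :
    ∫ g, f (fun i => g (Sum.inl i)) * h (fun k => g (Sum.inr k)) ∂(gpi (I ⊕ K)) =
      (∫ g, f g ∂(gpi I)) * ∫ g, h g ∂(gpi K) := by
  have hm := measurePreserving_sumPiEquivProdPi (fun _ : I ⊕ K => gaussianReal 0 1)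
  rw [← integral_prod_mul]
  have := hm.integral_comp' (g := fun z : (I → ℝ) × (K → ℝ) => f z.1 * h z.2)
  unfold gpi
  rw [← this]
  rfl
end PartFile2

section PartFile3
open MeasureTheory ProbabilityTheory Matrix

set_option linter.unusedSectionVars false
set_option linter.unusedSimpArgs false
section
variable {m J L : Type} [Fintype m] [DecidableEq m] [Fintype J] [Fintype L]

/-- parameter bounds for a family of symmetric matrices -/
structure HP (R : J → Matrix m m ℝ) (v s : ℝ) : Prop where
  symm : ∀ j, (R j)ᵀ = R j
  hv0 : 0 ≤ v
  hs0 : 0 ≤ s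
  hv : ∀ B : Matrix m m ℝ, ∑ j, (∑ a, ∑ b, R j a b * B a b) ^ 2 ≤ v ^ 2 * frobNormSq B
  hs : ∀ x : m → ℝ, ∑ j, (R j *ᵥ x) ⬝ᵥ (R j *ᵥ x) ≤ s ^ 2 * (x ⬝ᵥ x)

lemma frob_eq_trace (M : Matrix m m ℝ) : frobNormSq M = trace (Mᵀ * M) := by
  simp only [frobNormSq, trace, diag, mul_apply, transpose_apply]
  rw [Finset.sum_comm]
  simp [sq]

lemma frob_conj (U V B : Matrix m m ℝ) (hU : U * Uᵀ = 1) (hV : V * Vᵀ = 1) :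
    frobNormSq (Uᵀ * B * V) = frobNormSq B := by
  rw [frob_eq_trace, frob_eq_trace]
  simp only [transpose_mul, transpose_transpose]
  rw [show Vᵀ * (Bᵀ * U) * (Uᵀ * B * V) = Vᵀ * (Bᵀ * (U * Uᵀ) * B * V) by
    simp only [Matrix.mul_assoc], hU, trace_mul_comm, Matrix.mul_one, Matrix.mul_assoc, hV,
    Matrix.mul_one]

lemma dot_vecMul_orth (U : Matrix m m ℝ) (hU : U * Uᵀ = 1) (x : m → ℝ) :
    (x ᵥ* U) ⬝ᵥ (x ᵥ* U) = x ⬝ᵥ x := by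
  rw [← Matrix.mulVec_transpose U x, dotProduct_mulVec, vecMul_transpose,
    mulVec_mulVec, hU, one_mulVec]

lemma HP.dual {R : J → Matrix m m ℝ} {v s : ℝ} (h : HP R v s) (c : J → ℝ) :
    frobNormSq (∑ j, c j • R j) ≤ v ^ 2 * ∑ j, c j ^ 2 := by
  set B := ∑ j, c j • R j with hB
  have h1 : frobNormSq B = ∑ j, c j * ∑ a, ∑ b, R j a b * B a b := by
    unfold frobNormSq
    calc ∑ i, ∑ k, B i k ^ 2 = ∑ i, ∑ k, ∑ j, c j * (R j i k * B i k) := by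
          refine Finset.sum_congr rfl fun i _ => Finset.sum_congr rfl fun k _ => ?_
          rw [sq]
          nth_rewrite 1 [hB]
          rw [Matrix.sum_apply, Finset.sum_mul]
          simp [mul_assoc]
      _ = _ := by
          simp only [Finset.mul_sum]
          rw [Finset.sum_comm' (t' := Finset.univ) (s' := fun _ => Finset.univ) (by simp)]
          rw [Finset.sum_congr rfl fun i _ => Finset.sum_comm]
          rw [Finset.sum_comm, Finset.sum_congr rfl fun i _ => Finset.sum_comm]
  have h2 := Finset.sum_mul_sq_le_sq_mul_sq Finset.univ c (fun j => ∑ a, ∑ b, R j a b * B a b)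
  rw [← h1] at h2
  have h3 := h.hv B
  have hc : 0 ≤ ∑ j, c j ^ 2 := Finset.sum_nonneg fun _ _ => sq_nonneg _
  have hf : 0 ≤ frobNormSq B :=
    Finset.sum_nonneg fun _ _ => Finset.sum_nonneg fun _ _ => sq_nonneg _
  rcases hf.eq_or_lt with h0 | h0
  · rw [← h0]; positivity
  · have : frobNormSq B * frobNormSq B ≤ (v ^ 2 * ∑ j, c j ^ 2) * frobNormSq B := by
      nlinarith [mul_le_mul_of_nonneg_left h3 hc]
    exact le_of_mul_le_mul_right this h0

/-- slice lemma -/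
lemma HP.slice {R : J → Matrix m m ℝ} {v s : ℝ} (h : HP R v s) (x : m → ℝ)
    (B C D : Matrix m m ℝ) (hB : B * Bᵀ = 1) (hC : C * Cᵀ = 1) (hD : D * Dᵀ = 1) :
    ∑ b, ∑ c, ∑ d, (∑ j, ((R j *ᵥ x) ᵥ* B) b * (Cᵀ * R j * D) c d) ^ 2 ≤
      v ^ 2 * s ^ 2 * (x ⬝ᵥ x) := by
  have h1 : ∀ b, ∑ c, ∑ d, (∑ j, ((R j *ᵥ x) ᵥ* B) b * (Cᵀ * R j * D) c d) ^ 2 ≤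
      v ^ 2 * ∑ j, ((R j *ᵥ x) ᵥ* B) b ^ 2 := by
    intro b
    have := h.dual (fun j => ((R j *ᵥ x) ᵥ* B) b)
    rw [← frob_conj C D _ hC hD] at this
    refine le_trans (le_of_eq ?_) this
    unfold frobNormSq
    refine Finset.sum_congr rfl fun i _ => Finset.sum_congr rfl fun k _ => ?_
    congr 1
    rw [Matrix.mul_sum, Matrix.sum_mul, Matrix.sum_apply]
    refine Finset.sum_congr rfl fun j _ => ?_
    simp
  calc _ ≤ ∑ b, v ^ 2 * ∑ j, ((R j *ᵥ x) ᵥ* B) b ^ 2 := Finset.sum_le_sum fun b _ => h1 b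
    _ = v ^ 2 * ∑ j, (R j *ᵥ x) ⬝ᵥ (R j *ᵥ x) := by
      rw [← Finset.mul_sum, Finset.sum_comm]
      congr 1
      refine Finset.sum_congr rfl fun j _ => ?_
      rw [← dot_vecMul_orth B hB (R j *ᵥ x)]
      simp [dotProduct, sq]
    _ ≤ _ := by
      rw [mul_assoc]
      exact mul_le_mul_of_nonneg_left (h.hs x) (sq_nonneg _)

/-- the four-index kernel -/
def kap (R : J → Matrix m m ℝ) (A B C D : Matrix m m ℝ) (a b c d : m) : ℝ :=
  ∑ j, (Aᵀ * R j * B) a b * (Cᵀ * R j * D) c d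

lemma HP.entry_swap {R : J → Matrix m m ℝ} {v s : ℝ} (h : HP R v s) (A B : Matrix m m ℝ)
    (j : J) (a b : m) : (Aᵀ * R j * B) a b = (Bᵀ * R j * A) b a := by
  have : (Aᵀ * R j * B) = (Bᵀ * R j * A)ᵀ := by
    simp [transpose_mul, h.symm, Matrix.mul_assoc]
  rw [this, transpose_apply]

lemma HP.entry_col {R : J → Matrix m m ℝ} {v s : ℝ} (h : HP R v s) (A B : Matrix m m ℝ)
    (j : J) (a b : m) : (Aᵀ * R j * B) a b = ((R j *ᵥ (A.col a)) ᵥ* B) b := by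
  simp only [mul_apply, vecMul, mulVec, dotProduct, transpose_apply, col_apply]
  refine Finset.sum_congr rfl fun k _ => ?_
  congr 1
  refine Finset.sum_congr rfl fun i _ => ?_
  have := congrFun (congrFun (h.symm j) i) k
  rw [transpose_apply] at this
  rw [mul_comm, this]
  
end
end PartFile3

section PartFile4
open MeasureTheory ProbabilityTheory Matrix
set_option linter.unusedSectionVars false
set_option linter.unusedSimpArgs false
section
variable {m J L : Type} [Fintype m] [DecidableEq m] [Fintype J] [Fintype L]

lemma sum_rot (f : m → m → m → m → ℝ) :
    ∑ e, ∑ a, ∑ b, ∑ c, f e a b c = ∑ a, ∑ b, ∑ c, ∑ e, f e a b c := by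
  rw [Finset.sum_comm]
  refine Finset.sum_congr rfl fun a _ => ?_
  rw [Finset.sum_comm]
  refine Finset.sum_congr rfl fun b _ => ?_
  rw [Finset.sum_comm]

lemma sum_rev (f : m → m → m → ℝ) :
    ∑ a, ∑ b, ∑ c, f a b c = ∑ c, ∑ b, ∑ a, f a b c := by
  rw [Finset.sum_congr rfl fun a _ => Finset.sum_comm]
  rw [Finset.sum_comm]
  rw [Finset.sum_congr rfl fun a _ => Finset.sum_comm]

lemma cs3 (f g : m → m → m → ℝ) (P Q : ℝ) (hP : 0 ≤ P) (hQ : 0 ≤ Q)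
    (hf : ∑ a, ∑ b, ∑ c, f a b c ^ 2 ≤ P ^ 2) (hg : ∑ a, ∑ b, ∑ c, g a b c ^ 2 ≤ Q ^ 2) :
    ∑ a, ∑ b, ∑ c, |f a b c| * |g a b c| ≤ P * Q := by
  have e : ∀ h : m → m → m → ℝ, ∑ a, ∑ b, ∑ c, h a b c = ∑ t : m × m × m, h t.1 t.2.1 t.2.2 := by
    intro h
    simp [Fintype.sum_prod_type]
  rw [e] at *
  refine abs_le_of_sq_le_sq' ?_ (by positivity) |>.2
  have := Finset.sum_mul_sq_le_sq_mul_sq Finset.univ (fun t : m × m × m => |f t.1 t.2.1 t.2.2|)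
    (fun t => |g t.1 t.2.1 t.2.2|)
  simp only [sq_abs] at this
  rw [mul_pow]
  refine this.trans (mul_le_mul hf hg (Finset.sum_nonneg fun _ _ => sq_nonneg _) (sq_nonneg _))

variable {R : J → Matrix m m ℝ} {F : L → Matrix m m ℝ} {vR sR vF sF : ℝ}

lemma core_vec (hR : HP R vR sR) (hF : HP F vF sF) (x z : m → ℝ) (U1 U2 U3 : Matrix m m ℝ)
    (h1 : U1 * U1ᵀ = 1) (h2 : U2 * U2ᵀ = 1) (h3 : U3 * U3ᵀ = 1) :
    ∑ a, ∑ b, ∑ c, |∑ j, ((R j *ᵥ x) ᵥ* U1) a * (U2ᵀ * R j * U3) b c| *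
      |∑ k, (U1ᵀ * F k * U2) a b * ((F k *ᵥ z) ᵥ* U3) c| ≤
      (vR * sR * √(x ⬝ᵥ x)) * (vF * sF * √(z ⬝ᵥ z)) := by
  have hx : 0 ≤ x ⬝ᵥ x := Finset.sum_nonneg fun _ _ => mul_self_nonneg _
  have hz : 0 ≤ z ⬝ᵥ z := Finset.sum_nonneg fun _ _ => mul_self_nonneg _
  have := hR.hv0; have := hR.hs0; have := hF.hv0; have := hF.hs0
  apply cs3
  · positivity
  · positivity
  · refine (hR.slice x U1 U2 U3 h1 h2 h3).trans (le_of_eq ?_)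
    rw [mul_pow, mul_pow, Real.sq_sqrt hx]
  · rw [sum_rev]
    refine le_trans (le_of_eq ?_) ((hF.slice z U3 U2 U1 h3 h2 h1).trans (le_of_eq ?_))
    · refine Finset.sum_congr rfl fun c _ => Finset.sum_congr rfl fun b _ =>
        Finset.sum_congr rfl fun a _ => ?_
      congr 1
      refine Finset.sum_congr rfl fun k _ => ?_
      rw [hF.entry_swap, mul_comm]
    · rw [mul_pow, mul_pow, Real.sq_sqrt hz]

lemma kap_swap (hR : HP R vR sR) (A B C D : Matrix m m ℝ) (a b c d : m) :
    kap R A B C D a b c d = kap R C D A B c d a b := by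
  unfold kap
  refine Finset.sum_congr rfl fun k _ => ?_
  rw [mul_comm]

lemma core_first (hR : HP R vR sR) (hF : HP F vF sF) (U4 U1 U2 U3 : Matrix m m ℝ)
    (h1 : U1 * U1ᵀ = 1) (h2 : U2 * U2ᵀ = 1) (h3 : U3 * U3ᵀ = 1) (h4 : U4ᵀ * U4 = 1) (e : m) :
    ∑ a, ∑ b, ∑ c, |kap R U4 U1 U2 U3 e a b c| * |kap F U1 U2 U3 U4 a b c e| ≤
      vR * sR * (vF * sF) := by
  have hc : U4.col e ⬝ᵥ U4.col e = 1 := by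
    have := congrFun (congrFun h4 e) e
    simpa [mul_apply, dotProduct] using this
  have := core_vec hR hF (U4.col e) (U4.col e) U1 U2 U3 h1 h2 h3
  rw [hc] at this
  simp only [Real.sqrt_one, mul_one] at this
  refine le_trans (le_of_eq ?_) this
  unfold kap
  refine Finset.sum_congr rfl fun a _ => Finset.sum_congr rfl fun b _ =>
    Finset.sum_congr rfl fun c _ => ?_
  congr 2
  · refine Finset.sum_congr rfl fun j _ => ?_
    rw [hR.entry_col]
  · refine Finset.sum_congr rfl fun j _ => ?_
    rw [hF.entry_swap U3 U4, hF.entry_col U4 U3]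

lemma core_first_w (hR : HP R vR sR) (hF : HP F vF sF) (U4 U1 U2 U3 : Matrix m m ℝ)
    (h1 : U1 * U1ᵀ = 1) (h2 : U2 * U2ᵀ = 1) (h3 : U3 * U3ᵀ = 1) (h4 : U4ᵀ * U4 = 1)
    (w : m → ℝ) (hw : ∀ e, 0 ≤ w e) :
    ∑ e, ∑ a, ∑ b, ∑ c, w e * (|kap R U4 U1 U2 U3 e a b c| * |kap F U1 U2 U3 U4 a b c e|) ≤
      vR * sR * (vF * sF) * ∑ e, w e := by
  rw [Finset.mul_sum]
  refine Finset.sum_le_sum fun e _ => ?_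
  simp only [← Finset.mul_sum]
  rw [mul_comm]
  exact mul_le_mul_of_nonneg_right (core_first hR hF U4 U1 U2 U3 h1 h2 h3 h4 e) (hw e)

lemma core_all (hR : HP R vR sR) (hF : HP F vF sF) (U4 U1 U2 U3 : Matrix m m ℝ)
    (h1 : U1 * U1ᵀ = 1) (h2 : U2 * U2ᵀ = 1) (h3 : U3 * U3ᵀ = 1) (h4 : U4 * U4ᵀ = 1)
    (w4 w1 w2 w3 : m → ℝ) (hw1 : ∀ e, 0 ≤ w1 e) (hw2 : ∀ e, 0 ≤ w2 e)
    (hw3 : ∀ e, 0 ≤ w3 e) (hw4 : ∀ e, 0 ≤ w4 e) :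
    ∑ e, ∑ a, ∑ b, ∑ c, (w4 e + w1 a + w2 b + w3 c) *
        (|kap R U4 U1 U2 U3 e a b c| * |kap F U1 U2 U3 U4 a b c e|) ≤
      vR * sR * (vF * sF) * (∑ e, w4 e + ∑ e, w1 e + ∑ e, w2 e + ∑ e, w3 e) := by
  have h1' := mul_eq_one_comm.1 h1
  have h2' := mul_eq_one_comm.1 h2
  have h3' := mul_eq_one_comm.1 h3
  have h4' := mul_eq_one_comm.1 h4
  have i4 := core_first_w hR hF U4 U1 U2 U3 h1 h2 h3 h4' w4 hw4
  have i1 := core_first_w hF hR U1 U2 U3 U4 h2 h3 h4 h1' w1 hw1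
  have i2 := core_first_w hR hF U2 U3 U4 U1 h3 h4 h1 h2' w2 hw2
  have i3 := core_first_w hF hR U3 U4 U1 U2 h4 h1 h2 h3' w3 hw3
  simp only [kap_swap hR U2 U3 U4 U1] at i1 i2
  simp only [kap_swap hF U3 U4 U1 U2] at i2 i3
  rw [← sum_rot (fun e a b c => w1 a * (|kap F U1 U2 U3 U4 a b c e| * |kap R U4 U1 U2 U3 e a b c|))] at i1
  rw [← sum_rot (fun a b c e => w2 b * (|kap R U4 U1 U2 U3 e a b c| * |kap F U1 U2 U3 U4 a b c e|)), ← sum_rot (fun e a b c => w2 b * (|kap R U4 U1 U2 U3 e a b c| * |kap F U1 U2 U3 U4 a b c e|))] at i2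
  rw [← sum_rot (fun b c e a => w3 c * (|kap F U1 U2 U3 U4 a b c e| * |kap R U4 U1 U2 U3 e a b c|)), ← sum_rot (fun a b c e => w3 c * (|kap F U1 U2 U3 U4 a b c e| * |kap R U4 U1 U2 U3 e a b c|)), ← sum_rot (fun e a b c => w3 c * (|kap F U1 U2 U3 U4 a b c e| * |kap R U4 U1 U2 U3 e a b c|))] at i3
  simp only [mul_comm |kap F U1 U2 U3 U4 _ _ _ _|] at i1 i3
  simp only [add_mul, Finset.sum_add_distrib]
  linarith

end
end PartFile4

section PartFile5
open MeasureTheory ProbabilityTheory Matrix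
set_option linter.unusedSectionVars false
set_option linter.unusedSimpArgs false
section
variable {m J L : Type} [Fintype m] [DecidableEq m] [Fintype J] [Fintype L]

lemma spec_pow (X U : Matrix m m ℝ) (l : m → ℝ) (h1 : U * Uᵀ = 1) (h2 : Uᵀ * U = 1)
    (hs : X = U * diagonal l * Uᵀ) (n : ℕ) : X ^ n = U * diagonal (fun a => l a ^ n) * Uᵀ := by
  induction n with
  | zero => simp [h1]
  | succ n ih =>
    rw [pow_succ, ih, hs]
    rw [show U * diagonal (fun a => l a ^ n) * Uᵀ * (U * diagonal l * Uᵀ) =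
      U * diagonal (fun a => l a ^ n) * (Uᵀ * U) * diagonal l * Uᵀ by
      simp only [Matrix.mul_assoc], h2, Matrix.mul_one, Matrix.mul_assoc U, diagonal_mul_diagonal]
    simp [pow_succ]

lemma exists_spec (X : Matrix m m ℝ) (hX : Xᵀ = X) :
    ∃ (U : Matrix m m ℝ) (l : m → ℝ), U * Uᵀ = 1 ∧ Uᵀ * U = 1 ∧
      ∀ n : ℕ, X ^ n = U * diagonal (fun a => l a ^ n) * Uᵀ := by
  have hH : X.IsHermitian := by rw [IsHermitian, conjTranspose_eq_transpose_of_trivial, hX]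
  have h1 : (hH.eigenvectorUnitary : Matrix m m ℝ) * (hH.eigenvectorUnitary : Matrix m m ℝ)ᵀ = 1 := by
    have := (Unitary.mem_iff.1 hH.eigenvectorUnitary.2).2
    rwa [star_eq_conjTranspose, conjTranspose_eq_transpose_of_trivial] at this
  have h2 := mul_eq_one_comm.1 h1
  refine ⟨hH.eigenvectorUnitary, hH.eigenvalues, h1, h2, ?_⟩
  have hs : X = (hH.eigenvectorUnitary : Matrix m m ℝ) * diagonal hH.eigenvalues *
      (hH.eigenvectorUnitary : Matrix m m ℝ)ᵀ := by
    have := hH.spectral_theorem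
    rw [Unitary.conjStarAlgAut_apply, star_eq_conjTranspose, conjTranspose_eq_transpose_of_trivial] at this
    simpa using this
  exact spec_pow X _ _ h1 h2 hs

lemma trace_spec (U : Matrix m m ℝ) (l : m → ℝ) (h : Uᵀ * U = 1) :
    trace (U * diagonal l * Uᵀ) = ∑ a, l a := by
  rw [Matrix.mul_assoc, trace_mul_comm, Matrix.mul_assoc, h, Matrix.mul_one, trace_diagonal]

lemma trace_expand (P Q S T : Matrix m m ℝ) (l1 l2 l3 l4 : m → ℝ) :
    trace ((diagonal l4 * P) * ((diagonal l1 * Q) * ((diagonal l2 * S) * (diagonal l3 * T)))) =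
      ∑ e, ∑ a, ∑ b, ∑ c, (l4 e * l1 a * l2 b * l3 c) * ((P e a * S b c) * (Q a b * T c e)) := by
  simp only [trace, diag, mul_apply (M := _ * _), diagonal_mul, Finset.mul_sum]
  refine Finset.sum_congr rfl fun e _ => Finset.sum_congr rfl fun a _ => 
    Finset.sum_congr rfl fun b _ => Finset.sum_congr rfl fun c _ => ?_
  ring

lemma prod_pow_le (x1 x2 x3 x4 : ℝ) (k1 k2 k3 k4 n : ℕ) (hn : k1 + k2 + k3 + k4 = n) :
    |x1 ^ k1 * x2 ^ k2 * x3 ^ k3 * x4 ^ k4| ≤ |x1| ^ n + |x2| ^ n + |x3| ^ n + |x4| ^ n := by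
  set M := max (max |x1| |x2|) (max |x3| |x4|) with hM
  have hM0 : 0 ≤ M := le_trans (abs_nonneg x1) (by simp [hM])
  have e1 : |x1| ≤ M := by simp [hM]
  have e2 : |x2| ≤ M := by simp [hM]
  have e3 : |x3| ≤ M := by simp [hM]
  have e4 : |x4| ≤ M := by simp [hM]
  have h : |x1 ^ k1 * x2 ^ k2 * x3 ^ k3 * x4 ^ k4| ≤ M ^ n := by
    rw [abs_mul, abs_mul, abs_mul, abs_pow, abs_pow, abs_pow, abs_pow, ← hn, pow_add, pow_add, pow_add]
    gcongr
  refine h.trans ?_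
  have p1 : 0 ≤ |x1| ^ n := by positivity
  have p2 : 0 ≤ |x2| ^ n := by positivity
  have p3 : 0 ≤ |x3| ^ n := by positivity
  have p4 : 0 ≤ |x4| ^ n := by positivity
  rcases max_choice (max |x1| |x2|) (max |x3| |x4|) with h | h <;> 
  [rcases max_choice |x1| |x2| with h' | h'; rcases max_choice |x3| |x4| with h' | h'] <;>
  rw [hM, h, h'] <;> linarith

lemma sum_in1 {K : Type} [Fintype K] {α : Type} [Fintype α] (f : J → K → α → ℝ) :
    ∑ j, ∑ k, ∑ a, f j k a = ∑ a, ∑ j, ∑ k, f j k a := by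
  rw [Finset.sum_congr rfl fun j _ => Finset.sum_comm]
  rw [Finset.sum_comm]

lemma sum_in4 {K : Type} [Fintype K] (f : J → K → m → m → m → m → ℝ) :
    ∑ j, ∑ k, ∑ e, ∑ a, ∑ b, ∑ c, f j k e a b c = ∑ e, ∑ a, ∑ b, ∑ c, ∑ j, ∑ k, f j k e a b c := by
  rw [sum_in1]; refine Finset.sum_congr rfl fun e _ => ?_
  rw [sum_in1]; refine Finset.sum_congr rfl fun e _ => ?_
  rw [sum_in1]; refine Finset.sum_congr rfl fun e _ => ?_
  rw [sum_in1]

variable {R : J → Matrix m m ℝ} {F : L → Matrix m m ℝ} {vR sR vF sF : ℝ}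

lemma cross_trace (hR : HP R vR sR) (hF : HP F vF sF) (X Z : Matrix m m ℝ) (hX : Xᵀ = X)
    (hZ : Zᵀ = Z) (k1 k2 k3 k4 n : ℕ) (hn : k1 + k2 + k3 + k4 = n) (hev : Even n) :
    |∑ j, ∑ k, trace (R j * X ^ k1 * F k * X ^ k2 * R j * Z ^ k3 * F k * Z ^ k4)| ≤
      vR * sR * (vF * sF) * (2 * trace (X ^ n) + 2 * trace (Z ^ n)) := by
  obtain ⟨U, l, hU, hU', hXs⟩ := exists_spec X hX
  obtain ⟨V, w, hV, hV', hZs⟩ := exists_spec Z hZ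
  have key : ∀ j k, trace (R j * X ^ k1 * F k * X ^ k2 * R j * Z ^ k3 * F k * Z ^ k4) =
      ∑ e, ∑ a, ∑ b, ∑ c, (w e ^ k4 * l a ^ k1 * l b ^ k2 * w c ^ k3) *
        (((Vᵀ * R j * U) e a * (Uᵀ * R j * V) b c) * ((Uᵀ * F k * U) a b * (Vᵀ * F k * V) c e)) := by
    intro j k
    rw [← trace_expand, hXs k1, hXs k2, hZs k3, hZs k4]
    simp only [← Matrix.mul_assoc]
    refine (trace_mul_comm _ _).trans ?_
    simp only [← Matrix.mul_assoc]
    refine (trace_mul_comm _ _).trans ?_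
    simp only [← Matrix.mul_assoc]
  have e2 : ∑ j, ∑ k, trace (R j * X ^ k1 * F k * X ^ k2 * R j * Z ^ k3 * F k * Z ^ k4) =
      ∑ e, ∑ a, ∑ b, ∑ c, (w e ^ k4 * l a ^ k1 * l b ^ k2 * w c ^ k3) *
        (kap R V U U V e a b c * kap F U U V V a b c e) := by
    simp only [key, kap, Finset.sum_mul_sum]
    simp only [Finset.mul_sum]
    rw [sum_in4]
  rw [e2, hXs n, hZs n, trace_spec _ _ hU', trace_spec _ _ hV']
  have habs : ∀ x : ℝ, x ^ n = |x| ^ n := fun x => (hev.pow_abs x).symm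
  have hall := core_all hR hF V U U V hU hU hV hV (fun e => |w e| ^ n) (fun e => |l e| ^ n)
    (fun e => |l e| ^ n) (fun e => |w e| ^ n) (fun e => by positivity) (fun e => by positivity)
    (fun e => by positivity) (fun e => by positivity)
  rw [Finset.sum_congr rfl fun e _ => habs (l e), Finset.sum_congr rfl fun e _ => habs (w e)]
  refine le_trans ?_ (hall.trans (le_of_eq (by ring)))
  refine (Finset.abs_sum_le_sum_abs _ _).trans (Finset.sum_le_sum fun e _ => ?_)
  refine (Finset.abs_sum_le_sum_abs _ _).trans (Finset.sum_le_sum fun a _ => ?_)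
  refine (Finset.abs_sum_le_sum_abs _ _).trans (Finset.sum_le_sum fun b _ => ?_)
  refine (Finset.abs_sum_le_sum_abs _ _).trans (Finset.sum_le_sum fun c _ => ?_)
  rw [abs_mul, abs_mul (kap R V U U V e a b c)]
  refine mul_le_mul_of_nonneg_right ?_ (by positivity)
  exact prod_pow_le _ _ _ _ _ _ _ _ _ (by omega)

end
end PartFile5

section PartFile6
open MeasureTheory ProbabilityTheory Matrix
set_option linter.unusedSectionVars false
set_option linter.unusedSimpArgs false
section
variable {m J L : Type} [Fintype m] [DecidableEq m] [Fintype J] [Fintype L]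
variable {R : J → Matrix m m ℝ} {F : L → Matrix m m ℝ} {vR sR vF sF : ℝ}

lemma HP.row_sum (hR : HP R vR sR) (U : Matrix m m ℝ) (hU : U * Uᵀ = 1) (hU' : Uᵀ * U = 1) (a : m) :
    ∑ j, ∑ b, (Uᵀ * R j * U) a b ^ 2 ≤ sR ^ 2 := by
  have hc : U.col a ⬝ᵥ U.col a = 1 := by
    have := congrFun (congrFun hU' a) a
    simpa [mul_apply, dotProduct] using this
  have h := hR.hs (U.col a)
  rw [hc, mul_one] at h
  refine le_trans (le_of_eq ?_) h
  refine Finset.sum_congr rfl fun j _ => ?_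
  rw [← dot_vecMul_orth U hU]
  simp only [dotProduct]
  refine Finset.sum_congr rfl fun b _ => ?_
  rw [hR.entry_col, sq]

lemma trace_mul_eq (A B : Matrix m m ℝ) : trace (A * B) = ∑ a, ∑ b, A a b * B b a := by
  simp only [trace, diag, mul_apply]

lemma khin_trace (hR : HP R vR sR) (X : Matrix m m ℝ) (hX : Xᵀ = X)
    (k l n : ℕ) (hn : k + l = n) (hev : Even n) :
    |∑ j, trace (R j * X ^ k * R j * X ^ l)| ≤ 4 * sR ^ 2 * trace (X ^ n) := by
  obtain ⟨U, w, hU, hU', hXs⟩ := exists_spec X hX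
  have key : ∀ j, trace (R j * X ^ k * R j * X ^ l) =
      ∑ a, ∑ b, (w a ^ l * w b ^ k) * (Uᵀ * R j * U) a b ^ 2 := by
    intro j
    have : trace (R j * X ^ k * R j * X ^ l) = trace ((diagonal (fun a => w a ^ l) * (Uᵀ * R j * U)) *
        (diagonal (fun a => w a ^ k) * (Uᵀ * R j * U))) := by
      rw [hXs k, hXs l]
      simp only [← Matrix.mul_assoc]
      refine (trace_mul_comm _ _).trans ?_
      simp only [← Matrix.mul_assoc]
      refine (trace_mul_comm _ _).trans ?_
      simp only [← Matrix.mul_assoc]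
    rw [this]
    rw [trace_mul_eq]
    simp only [diagonal_mul]
    refine Finset.sum_congr rfl fun a _ => Finset.sum_congr rfl fun b _ => ?_
    rw [hR.entry_swap U U j b a]; ring
  have habs : ∀ x : ℝ, x ^ n = |x| ^ n := fun x => (hev.pow_abs x).symm
  rw [hXs n, trace_spec _ _ hU', Finset.sum_congr rfl fun e _ => habs (w e)]
  simp only [key]
  have h1 : |∑ j, ∑ a, ∑ b, (w a ^ l * w b ^ k) * (Uᵀ * R j * U) a b ^ 2| ≤
      ∑ j, ∑ a, ∑ b, (2 * |w a| ^ n + 2 * |w b| ^ n) * (Uᵀ * R j * U) a b ^ 2 := by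
    refine (Finset.abs_sum_le_sum_abs _ _).trans (Finset.sum_le_sum fun e _ => ?_)
    refine (Finset.abs_sum_le_sum_abs _ _).trans (Finset.sum_le_sum fun a _ => ?_)
    refine (Finset.abs_sum_le_sum_abs _ _).trans (Finset.sum_le_sum fun b _ => ?_)
    rw [abs_mul, abs_of_nonneg (sq_nonneg ((Uᵀ * R e * U) a b))]
    refine mul_le_mul_of_nonneg_right ?_ (by positivity)
    have := prod_pow_le (w a) (w b) (w a) (w b) l k 0 0 n (by omega)
    simp only [pow_zero, mul_one] at this
    linarith
  have h2 : ∑ j, ∑ a, ∑ b, (2 * |w a| ^ n) * (Uᵀ * R j * U) a b ^ 2 ≤ 2 * sR ^ 2 * ∑ a, |w a| ^ n := by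
    rw [Finset.sum_comm, Finset.mul_sum]
    refine Finset.sum_le_sum fun a _ => ?_
    simp only [← Finset.mul_sum]
    have := mul_le_mul_of_nonneg_left (hR.row_sum U hU hU' a) (show 0 ≤ 2 * |w a| ^ n by positivity)
    linarith
  have h3 : ∑ j, ∑ a, ∑ b, (2 * |w b| ^ n) * (Uᵀ * R j * U) a b ^ 2 =
      ∑ j, ∑ a, ∑ b, (2 * |w a| ^ n) * (Uᵀ * R j * U) a b ^ 2 := by
    refine Finset.sum_congr rfl fun j _ => ?_
    rw [Finset.sum_comm]
    refine Finset.sum_congr rfl fun a _ => Finset.sum_congr rfl fun b _ => ?_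
    rw [hR.entry_swap U U j b a]
  refine h1.trans ?_
  simp only [add_mul, Finset.sum_add_distrib]
  rw [h3]; linarith

lemma vec_expand (x z : m → ℝ) (U V : Matrix m m ℝ) (A B C D : Matrix m m ℝ) (l1 l2 l3 : m → ℝ) :
    (x ᵥ* U) ⬝ᵥ ((diagonal l1 * A * diagonal l2 * B * diagonal l3) *ᵥ z) =
      ∑ a, ∑ b, ∑ c, (l1 a * l2 b * l3 c) * (((x ᵥ* U) a * B b c) * (A a b * z c)) := by
  simp only [dotProduct, mulVec, mul_diagonal]
  refine Finset.sum_congr rfl fun a _ => ?_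
  rw [Finset.sum_comm, Finset.mul_sum]
  refine Finset.sum_congr rfl fun c _ => ?_
  rw [mul_apply, Finset.sum_mul, Finset.sum_mul, Finset.mul_sum]
  refine Finset.sum_congr rfl fun b _ => ?_
  rw [mul_diagonal, diagonal_mul]
  ring

lemma vec_pow_le (Z : Matrix m m ℝ) (hZ : Zᵀ = Z) (V : Matrix m m ℝ) (w : m → ℝ) (hV : V * Vᵀ = 1)
    (hV' : Vᵀ * V = 1) (hZs : ∀ n : ℕ, Z ^ n = V * diagonal (fun a => w a ^ n) * Vᵀ)
    (ρ : ℝ) (hρ : ∀ a, |w a| ≤ ρ) (k : ℕ) (y : m → ℝ) (h0 : 0 ≤ ρ) :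
    √((Z ^ k *ᵥ y) ⬝ᵥ (Z ^ k *ᵥ y)) ≤ ρ ^ k * √(y ⬝ᵥ y) := by
  have : (Z ^ k *ᵥ y) ⬝ᵥ (Z ^ k *ᵥ y) ≤ (ρ ^ k) ^ 2 * (y ⬝ᵥ y) := by
    have h1 : (Z ^ k *ᵥ y) ᵥ* V = fun a => w a ^ k * (y ᵥ* V) a := by
      rw [hZs k, ← mulVec_transpose, ← mulVec_transpose, mulVec_mulVec,
        Matrix.mul_assoc, ← Matrix.mul_assoc, hV', Matrix.one_mul, ← mulVec_mulVec]
      ext a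
      rw [mulVec_diagonal]
    rw [← dot_vecMul_orth V hV, ← dot_vecMul_orth V hV y, h1]
    simp only [dotProduct, Finset.mul_sum]
    refine Finset.sum_le_sum fun a _ => ?_
    have : (w a ^ k) ^ 2 ≤ (ρ ^ k) ^ 2 := by
      rw [← sq_abs, abs_pow]
      have := hρ a
      gcongr
    nlinarith [mul_self_nonneg ((y ᵥ* V) a)]
  calc _ ≤ √((ρ ^ k) ^ 2 * (y ⬝ᵥ y)) := Real.sqrt_le_sqrt this
    _ = _ := by rw [Real.sqrt_mul (by positivity), Real.sqrt_sq (by positivity)]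

lemma cross_vec [Nonempty m] (hR : HP R vR sR) (hF : HP F vF sF) (X Z : Matrix m m ℝ) (hX : Xᵀ = X)
    (hZ : Zᵀ = Z) (k1 k2 k3 k4 n : ℕ) (hn : k1 + k2 + k3 + k4 = n) (x y : m → ℝ) (t : ℝ) (ht : 0 < t) :
    |∑ j, ∑ k, x ⬝ᵥ ((R j * X ^ k1 * F k * X ^ k2 * R j * Z ^ k3 * F k * Z ^ k4) *ᵥ y)| ≤
      vR * sR * (vF * sF) * (√(x ⬝ᵥ x) * √(y ⬝ᵥ y)) *
        (t + (trace (X ^ (2 * n)) + trace (Z ^ (2 * n))) / t) := by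
  obtain ⟨U, l, hU, hU', hXs⟩ := exists_spec X hX
  obtain ⟨V, w, hV, hV', hZs⟩ := exists_spec Z hZ
  have := hR.hv0; have := hR.hs0; have := hF.hv0; have := hF.hs0
  obtain ⟨ρ, h0, hl, hw, hρ⟩ : ∃ ρ : ℝ, 0 ≤ ρ ∧ (∀ a, |l a| ≤ ρ) ∧ (∀ a, |w a| ≤ ρ) ∧
      ρ ^ (2 * n) ≤ trace (X ^ (2 * n)) + trace (Z ^ (2 * n)) := by
    obtain ⟨a0, -, ha0⟩ := Finset.exists_max_image (Finset.univ : Finset (m ⊕ m))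
      (fun a => |Sum.elim l w a|) ⟨Sum.inl (Classical.arbitrary m), Finset.mem_univ _⟩
    refine ⟨|Sum.elim l w a0|, abs_nonneg _, fun a => ha0 (Sum.inl a) (Finset.mem_univ _),
      fun a => ha0 (Sum.inr a) (Finset.mem_univ _), ?_⟩
    rw [hXs, hZs, trace_spec _ _ hU', trace_spec _ _ hV']
    have e : ∑ a, l a ^ (2 * n) + ∑ a, w a ^ (2 * n) = ∑ a : m ⊕ m, |Sum.elim l w a| ^ (2 * n) := by
      simp [Fintype.sum_sum_type, (even_two_mul n).pow_abs]
    rw [e]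
    exact Finset.single_le_sum (f := fun a => |Sum.elim l w a| ^ (2 * n))
      (fun a _ => by positivity) (Finset.mem_univ a0)
  set z := Z ^ k4 *ᵥ y with hz
  have key : ∀ j k, x ⬝ᵥ ((R j * X ^ k1 * F k * X ^ k2 * R j * Z ^ k3 * F k * Z ^ k4) *ᵥ y) =
      ∑ a, ∑ b, ∑ c, (l a ^ k1 * l b ^ k2 * w c ^ k3) *
        ((((R j *ᵥ x) ᵥ* U) a * (Uᵀ * R j * V) b c) * ((Uᵀ * F k * U) a b * ((F k *ᵥ z) ᵥ* V) c)) := by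
    intro j k
    rw [← vec_expand (R j *ᵥ x) _ U V _ _ 0 0]
    rw [← mulVec_transpose V, ← vecMul_transpose (R j), hR.symm, vecMul_vecMul, hz,
      mulVec_mulVec, mulVec_mulVec, ← dotProduct_mulVec, mulVec_mulVec, hXs k1, hXs k2, hZs k3,
      mulVec_mulVec]
    simp only [← Matrix.mul_assoc]
  have e2 : ∑ j, ∑ k, x ⬝ᵥ ((R j * X ^ k1 * F k * X ^ k2 * R j * Z ^ k3 * F k * Z ^ k4) *ᵥ y) =
      ∑ a, ∑ b, ∑ c, (l a ^ k1 * l b ^ k2 * w c ^ k3) *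
        ((∑ j, ((R j *ᵥ x) ᵥ* U) a * (Uᵀ * R j * V) b c) *
          (∑ k, (Uᵀ * F k * U) a b * ((F k *ᵥ z) ᵥ* V) c)) := by
    simp only [key, Finset.sum_mul_sum]
    simp only [Finset.mul_sum]
    rw [sum_in1]; refine Finset.sum_congr rfl fun e _ => ?_
    rw [sum_in1]; refine Finset.sum_congr rfl fun e _ => ?_
    rw [sum_in1]
  have h1 : |∑ j, ∑ k, x ⬝ᵥ ((R j * X ^ k1 * F k * X ^ k2 * R j * Z ^ k3 * F k * Z ^ k4) *ᵥ y)| ≤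
      ρ ^ (k1 + k2 + k3) * ((vR * sR * √(x ⬝ᵥ x)) * (vF * sF * √(z ⬝ᵥ z))) := by
    rw [e2]
    refine le_trans ?_ (mul_le_mul_of_nonneg_left (core_vec hR hF x z U U V hU hU hV) (by positivity))
    rw [Finset.mul_sum]
    refine (Finset.abs_sum_le_sum_abs _ _).trans (Finset.sum_le_sum fun a _ => ?_)
    rw [Finset.mul_sum]
    refine (Finset.abs_sum_le_sum_abs _ _).trans (Finset.sum_le_sum fun b _ => ?_)
    rw [Finset.mul_sum]
    refine (Finset.abs_sum_le_sum_abs _ _).trans (Finset.sum_le_sum fun c _ => ?_)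
    rw [abs_mul, abs_mul (∑ j, _)]
    refine mul_le_mul_of_nonneg_right ?_ (by positivity)
    rw [abs_mul, abs_mul, abs_pow, abs_pow, abs_pow, pow_add, pow_add]
    have := hl a; have := hl b; have := hw c
    gcongr
  have h2 := vec_pow_le Z hZ V w hV hV' hZs ρ hw k4 y h0
  rw [← hz] at h2
  have h3 : ρ ^ n ≤ t + (trace (X ^ (2 * n)) + trace (Z ^ (2 * n))) / t := by
    have : ρ ^ n ≤ t + ρ ^ (2 * n) / t := by
      rw [← sub_nonneg]
      have : t + ρ ^ (2 * n) / t - ρ ^ n = (t ^ 2 + (ρ ^ n) ^ 2 - t * ρ ^ n) / t := by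
        field_simp
        ring
      rw [this]
      apply div_nonneg _ ht.le
      nlinarith [sq_nonneg (t - ρ ^ n), sq_nonneg (t + ρ ^ n), mul_nonneg ht.le (pow_nonneg h0 n)]
    have h4 : ρ ^ (2 * n) / t ≤ (trace (X ^ (2 * n)) + trace (Z ^ (2 * n))) / t := by gcongr
    linarith
  calc _ ≤ _ := h1
    _ ≤ ρ ^ (k1 + k2 + k3) * ((vR * sR * √(x ⬝ᵥ x)) * (vF * sF * (ρ ^ k4 * √(y ⬝ᵥ y)))) := by gcongr
    _ = vR * sR * (vF * sF) * (√(x ⬝ᵥ x) * √(y ⬝ᵥ y)) * ρ ^ n := by rw [← hn]; ring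
    _ ≤ _ := by gcongr
end
end PartFile6

section PartFile7
open MeasureTheory ProbabilityTheory Matrix
set_option linter.unusedSectionVars false
set_option linter.unusedSimpArgs false
section
variable {m : Type} [Fintype m] [DecidableEq m]
variable {S : Type} [CommRing S] [Algebra ℝ S]

lemma map_der_mul (D : Derivation ℝ S S) (A B : Matrix m m S) :
    (A * B).map D = A.map D * B + A * B.map D := by
  ext i j
  simp only [map_apply, mul_apply, Matrix.add_apply, map_sum, Derivation.leibniz, smul_eq_mul,
    Finset.sum_add_distrib]
  rw [add_comm]
  congr 1
  exact Finset.sum_congr rfl fun _ _ => mul_comm _ _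

lemma map_der_pow (D : Derivation ℝ S S) (A : Matrix m m S) (n : ℕ) :
    (A ^ n).map D = ∑ i ∈ Finset.range n, A ^ i * A.map D * A ^ (n - 1 - i) := by
  induction n with
  | zero => 
    ext i j
    simp only [pow_zero, map_apply, Finset.range_zero, Finset.sum_empty, Matrix.zero_apply, one_apply]
    split_ifs <;> simp
  | succ n ih =>
    rw [pow_succ, map_der_mul, ih, Finset.sum_range_succ, Finset.sum_mul]
    simp only [add_tsub_cancel_right, Nat.sub_self, pow_zero, Matrix.mul_one]
    congr 1
    refine Finset.sum_congr rfl fun i hi => ?_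
    have : n - i = n - 1 - i + 1 := by have := Finset.mem_range.1 hi; omega
    rw [this, pow_succ, Matrix.mul_assoc]

lemma map_der_trace (D : Derivation ℝ S S) (A : Matrix m m S) : D (trace A) = trace (A.map D) := by
  simp [trace, map_sum]

/-- constant matrices -/
def cm (A : Matrix m m ℝ) : Matrix m m S := A.map (algebraMap ℝ S)

lemma map_der_cm (D : Derivation ℝ S S) (A : Matrix m m ℝ) : (cm A : Matrix m m S).map D = 0 := by
  ext i j
  simp [cm]

lemma map_der_smul_cm (D : Derivation ℝ S S) (x : S) (A : Matrix m m ℝ) :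
    (x • cm A : Matrix m m S).map D = D x • cm A := by
  ext i j
  simp [cm, mul_comm]

lemma map_der_sum {ι : Type} [Fintype ι] (D : Derivation ℝ S S) (A : ι → Matrix m m S) :
    (∑ i, A i).map D = ∑ i, (A i).map D := by
  ext a b
  simp [Matrix.sum_apply]
end

section
variable {m κ J : Type} [Fintype m] [DecidableEq m] [Fintype κ] [DecidableEq κ] [Fintype J]

/-- evaluation of polynomial matrices -/
noncomputable def ev (g : κ → ℝ) (w : Bool → ℝ) :
    Matrix m m (MvPolynomial (κ ⊕ Bool) ℝ) →+* Matrix m m ℝ :=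
  (MvPolynomial.eval (evp g w)).mapMatrix

lemma ev_cm (g : κ → ℝ) (w : Bool → ℝ) (A : Matrix m m ℝ) : ev g w (cm A) = A := by
  ext i j
  simp [ev, cm]

lemma ev_smul (g : κ → ℝ) (w : Bool → ℝ) (x : MvPolynomial (κ ⊕ Bool) ℝ)
    (A : Matrix m m (MvPolynomial (κ ⊕ Bool) ℝ)) :
    ev g w (x • A) = MvPolynomial.eval (evp g w) x • ev g w A := by
  ext i j
  simp [ev]

lemma ev_trace (g : κ → ℝ) (w : Bool → ℝ) (A : Matrix m m (MvPolynomial (κ ⊕ Bool) ℝ)) :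
    MvPolynomial.eval (evp g w) (trace A) = trace (ev g w A) := by
  simp [trace, ev]

lemma ev_entry (g : κ → ℝ) (w : Bool → ℝ) (A : Matrix m m (MvPolynomial (κ ⊕ Bool) ℝ)) (i j : m) :
    MvPolynomial.eval (evp g w) (A i j) = ev g w A i j := by
  simp [ev]

lemma EE_trace (w : Bool → ℝ) (A : Matrix m m (MvPolynomial (κ ⊕ Bool) ℝ)) :
    EE w (trace A) = ∫ g, trace (ev g w A) ∂(gpi κ) := by
  rw [EE_apply]; simp only [ev_trace]

lemma integrable_trace_ev (w : Bool → ℝ) (A : Matrix m m (MvPolynomial (κ ⊕ Bool) ℝ)) :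
    Integrable (fun g => trace (ev g w A)) (gpi κ) := by
  have := integrable_eval_evp w (trace A)
  simpa only [ev_trace] using this

lemma integrable_entry_ev (w : Bool → ℝ) (A : Matrix m m (MvPolynomial (κ ⊕ Bool) ℝ)) (i j : m) :
    Integrable (fun g => ev g w A i j) (gpi κ) := by
  have := integrable_eval_evp w (A i j)
  simpa only [ev_entry] using this

/-- gaussian series -/
def gX (F : κ → Matrix m m ℝ) (g : κ → ℝ) : Matrix m m ℝ := ∑ k, g k • F k

/-- polynomial version -/
noncomputable def PX (F : κ → Matrix m m ℝ) : Matrix m m (MvPolynomial (κ ⊕ Bool) ℝ) :=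
  ∑ k, (MvPolynomial.X (Sum.inl k) : MvPolynomial (κ ⊕ Bool) ℝ) • cm (F k)

lemma ev_PX (F : κ → Matrix m m ℝ) (g : κ → ℝ) (w : Bool → ℝ) : ev g w (PX F) = gX F g := by
  simp only [PX, gX, map_sum, ev_smul, ev_cm, MvPolynomial.eval_X, evp, Sum.elim_inl]

lemma map_pderiv_PX (F : κ → Matrix m m ℝ) (k : κ) :
    (PX F).map (MvPolynomial.pderiv (Sum.inl k)) = cm (F k) := by
  rw [PX, map_der_sum]
  simp only [map_der_smul_cm, MvPolynomial.pderiv_X]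
  rw [Finset.sum_eq_single k]
  · simp
  · intro b _ hb
    simp [Pi.single_apply, hb]
  · simp

lemma gX_symm (F : κ → Matrix m m ℝ) (hF : ∀ k, (F k)ᵀ = F k) (g : κ → ℝ) : (gX F g)ᵀ = gX F g := by
  simp [gX, transpose_sum, hF]

lemma smul_mul_trace {S : Type} [CommRing S] (x : S) (M A N : Matrix m m S) :
    trace (M * (x • A) * N) = x * trace (M * A * N) := by
  simp [trace_smul]

/-- ibp for matrices -/
lemma ibp_trace (w : Bool → ℝ) (F : κ → Matrix m m ℝ) (N : Matrix m m (MvPolynomial (κ ⊕ Bool) ℝ)) :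
    EE w (trace (PX F * N)) =
      ∑ k, EE w (trace (cm (F k) * N.map (MvPolynomial.pderiv (Sum.inl k)))) := by
  rw [PX, Finset.sum_mul, trace_sum, map_sum]
  refine Finset.sum_congr rfl fun k _ => ?_
  rw [smul_mul_assoc, trace_smul, smul_eq_mul, EE_ibp, map_der_trace, map_der_mul, map_der_cm,
    Matrix.zero_mul, zero_add]

lemma EE_sum_trace {ι : Type} [Fintype ι] (w : Bool → ℝ)
    (A : ι → Matrix m m (MvPolynomial (κ ⊕ Bool) ℝ)) :
    ∑ k, EE w (trace (A k)) = ∫ g, ∑ k, trace (ev g w (A k)) ∂(gpi κ) := by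
  rw [integral_finsetSum _ fun k _ => integrable_trace_ev w (A k)]
  simp only [EE_trace]

lemma ibp_pow (F : κ → Matrix m m ℝ) (n : ℕ) (T : Matrix m m ℝ) :
    ∫ g, trace (gX F g ^ (n + 1) * T) ∂(gpi κ) =
      ∑ i ∈ Finset.range n, ∫ g, ∑ k, trace (F k * gX F g ^ i * F k * gX F g ^ (n - 1 - i) * T) ∂(gpi κ) := by
  have h := ibp_trace (fun _ => 0) F (PX F ^ n * cm T)
  rw [EE_trace] at h
  simp only [map_mul, map_pow, ev_PX, ev_cm] at h
  simp only [pow_succ', Matrix.mul_assoc] at h ⊢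
  rw [h]
  simp only [map_der_mul, map_der_cm, map_der_pow, map_pderiv_PX, Matrix.mul_zero, add_zero,
    Finset.sum_mul, Finset.mul_sum, trace_sum, map_sum]
  rw [Finset.sum_comm]
  refine Finset.sum_congr rfl fun i _ => ?_
  rw [EE_sum_trace]
  simp only [map_mul, map_pow, ev_PX, ev_cm, Matrix.mul_assoc]
end
end PartFile7

section PartFile8
open MeasureTheory ProbabilityTheory Matrix
set_option linter.unusedSectionVars false
set_option linter.unusedSimpArgs false
section
variable {m κ J : Type} [Fintype m] [DecidableEq m] [Fintype κ] [DecidableEq κ] [Fintype J]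

noncomputable def BB (F : κ → Matrix m m ℝ) (k : ℕ) : Matrix m m ℝ :=
  Matrix.of fun i j => ∫ g, (gX F g ^ k) i j ∂(gpi κ)

abbrev SS (κ : Type) := MvPolynomial ((κ ⊕ κ) ⊕ Bool) ℝ

noncomputable def xc : SS κ := MvPolynomial.X (Sum.inr false)
noncomputable def xs : SS κ := MvPolynomial.X (Sum.inr true)
noncomputable def xa (γ : κ) : SS κ := MvPolynomial.X (Sum.inl (Sum.inl γ))
noncomputable def xb (γ : κ) : SS κ := MvPolynomial.X (Sum.inl (Sum.inr γ))

noncomputable def PU (F : κ → Matrix m m ℝ) : Matrix m m (SS κ) := ∑ γ, xa γ • cm (F γ)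
noncomputable def PV (F : κ → Matrix m m ℝ) : Matrix m m (SS κ) :=
  ∑ γ, (xc * xa γ + xs * xb γ) • cm (F γ)

noncomputable def dlt (γ : κ) : Derivation ℝ (SS κ) (SS κ) :=
  (xc : SS κ) • MvPolynomial.pderiv (Sum.inl (Sum.inr γ)) - (xs : SS κ) • MvPolynomial.pderiv (Sum.inl (Sum.inl γ))

lemma PU_Dth (F : κ → Matrix m m ℝ) : (PU F).map Dth = 0 := by
  rw [PU, map_der_sum]
  simp only [map_der_smul_cm]
  simp [Dth, xa, MvPolynomial.pderiv_X]

lemma PV_Dth (F : κ → Matrix m m ℝ) :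
    (PV F).map Dth = ∑ γ, (xc * xb γ - xs * xa γ) • cm (F γ) := by
  rw [PV, map_der_sum]
  refine Finset.sum_congr rfl fun γ _ => ?_
  rw [map_der_smul_cm]
  congr 1
  simp [Dth, xa, xb, xc, xs, MvPolynomial.pderiv_X, Derivation.leibniz]
  try ring

lemma PU_dlt (F : κ → Matrix m m ℝ) (γ : κ) : (PU F).map (dlt γ) = - ((xs : SS κ) • cm (F γ)) := by
  rw [PU, map_der_sum]
  simp only [map_der_smul_cm]
  rw [Finset.sum_eq_single γ]
  · simp [dlt, xa, MvPolynomial.pderiv_X]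
  · intro b _ hb
    simp [dlt, xa, MvPolynomial.pderiv_X, Pi.single_apply, hb]
  · simp

lemma PV_dlt (F : κ → Matrix m m ℝ) (γ : κ) : (PV F).map (dlt γ) = 0 := by
  rw [PV, map_der_sum]
  refine Finset.sum_eq_zero fun b _ => ?_
  rw [map_der_smul_cm]
  have : (dlt γ) (xc * xa b + xs * xb b) = 0 := by
    by_cases hb : b = γ
    · subst hb
      simp [dlt, xa, xb, xc, xs, MvPolynomial.pderiv_X, Derivation.leibniz]
      ring
    · simp [dlt, xa, xb, xc, xs, MvPolynomial.pderiv_X, Derivation.leibniz, Pi.single_apply, hb]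
  rw [this, zero_smul]

lemma EE_dlt (w : Bool → ℝ) (γ : κ) (q : SS κ) :
    EE w ((xc * xb γ - xs * xa γ) * q) = EE w (dlt γ q) := by
  have h1 := EE_ibp (κ := κ ⊕ κ) w (Sum.inr γ) (xc * q)
  have h2 := EE_ibp (κ := κ ⊕ κ) w (Sum.inl γ) (xs * q)
  have e1 : (xc * xb γ - xs * xa γ) * q = xb γ * (xc * q) - xa γ * (xs * q) := by ring
  rw [e1, map_sub]
  unfold xb xa
  rw [h1, h2, ← map_sub]
  congr 1
  simp [dlt, xc, xs, MvPolynomial.pderiv_X, Derivation.leibniz]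

lemma Dth_main (w : Bool → ℝ) (F : κ → Matrix m m ℝ) (M N : Matrix m m (SS κ)) (hM : M.map Dth = 0)
    (hN : ∀ D : Derivation ℝ (SS κ) (SS κ), N.map D = 0) (l : ℕ) :
    EE w (Dth (trace (M * PV F ^ l * N))) =
      ∑ γ, ∑ i ∈ Finset.range l,
        EE w (trace (M.map (dlt γ) * PV F ^ i * cm (F γ) * PV F ^ (l - 1 - i) * N)) := by
  have hp : ∀ γ i, (PV F ^ i).map (dlt γ) = 0 := by
    intro γ i
    rw [map_der_pow, PV_dlt]; simp
  rw [map_der_trace, map_der_mul, hN, Matrix.mul_zero, add_zero, map_der_mul, hM, Matrix.zero_mul,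
    zero_add, map_der_pow, PV_Dth]
  simp only [Finset.mul_sum, Finset.sum_mul, trace_sum, map_sum]
  rw [Finset.sum_comm]
  refine Finset.sum_congr rfl fun γ _ => Finset.sum_congr rfl fun i _ => ?_
  have e : M * (PV F ^ i * (xc * xb γ - xs * xa γ) • cm (F γ) * PV F ^ (l - 1 - i)) * N =
    (xc * xb γ - xs * xa γ) • (M * PV F ^ i * cm (F γ) * PV F ^ (l - 1 - i) * N) := by
    simp only [mul_smul_comm, smul_mul_assoc, Matrix.mul_assoc]
  rw [e, trace_smul, smul_eq_mul, EE_dlt, map_der_trace]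
  simp only [map_der_mul, hp, map_der_cm, hN, Matrix.mul_zero, add_zero, Matrix.zero_mul]

lemma ev_PU (F : κ → Matrix m m ℝ) (g : κ ⊕ κ → ℝ) (w : Bool → ℝ) :
    ev g w (PU F) = gX F (fun γ => g (Sum.inl γ)) := by
  simp only [PU, gX, map_sum, ev_smul, ev_cm, xa, MvPolynomial.eval_X, evp, Sum.elim_inl]

lemma ev_PV (F : κ → Matrix m m ℝ) (g : κ ⊕ κ → ℝ) (θ : ℝ) :
    ev g (cs θ) (PV F) = gX F (fun γ => Real.cos θ * g (Sum.inl γ) + Real.sin θ * g (Sum.inr γ)) := by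
  simp only [PV, gX, map_sum, ev_smul, ev_cm, xa, xb, xc, xs, map_add, map_mul,
    MvPolynomial.eval_X, evp, Sum.elim_inl, Sum.elim_inr, cs, cond_true, cond_false]

lemma measurable_gX_trace (F : κ → Matrix m m ℝ) (A B T : Matrix m m ℝ) (k l : ℕ) :
    Continuous (fun g => trace (A * gX F g ^ k * B * gX F g ^ l * T)) := by
  have : Continuous (gX F) := by unfold gX; fun_prop
  fun_prop

lemma integral_inl {f : (κ → ℝ) → ℝ} (hf : Continuous f) :
    ∫ g, f (fun γ => g (Sum.inl γ)) ∂(gpi (κ ⊕ κ)) = ∫ g, f g ∂(gpi κ) := by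
  have h := gpi_map_inj (I := κ) (K := κ ⊕ κ) Sum.inl Sum.inl_injective
  rw [← h.map_eq, integral_map h.measurable.aemeasurable hf.aestronglyMeasurable]

lemma integral_PV_pow (F : κ → Matrix m m ℝ) (q : ℕ) (θ : ℝ) :
    ∫ g, trace (ev g (cs θ) (PV F) ^ q) ∂(gpi (κ ⊕ κ)) = ∫ g, trace (gX F g ^ q) ∂(gpi κ) := by
  have hd : ∀ t, HasDerivAt (fun t => EE (cs t) (trace (1 * PV F ^ q * 1))) 0 t := by
    intro t
    have h := hasDerivAt_EE (trace (1 * PV F ^ q * 1)) t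
    have h1 : ∀ D : Derivation ℝ (SS κ) (SS κ), (1 : Matrix m m (SS κ)).map D = 0 := by
      intro D
      have := map_der_pow D (1 : Matrix m m (SS κ)) 0
      simpa using this
    rw [Dth_main _ _ _ _ (h1 _) h1] at h
    simpa [h1] using h
  have hc := is_const_of_deriv_eq_zero (fun t => (hd t).differentiableAt) (fun t => (hd t).deriv) θ 0
  simp only [EE_trace, Matrix.one_mul, Matrix.mul_one, map_pow] at hc
  rw [hc]
  simp only [ev_PV, Real.cos_zero, Real.sin_zero, one_mul, zero_mul, add_zero]
  refine integral_inl (f := fun g => trace (gX F g ^ q)) ?_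
  have := measurable_gX_trace F 1 1 1 q 0
  simpa using this

end
end PartFile8

section PartFile9
open MeasureTheory ProbabilityTheory Matrix
set_option linter.unusedSectionVars false
set_option linter.unusedSimpArgs false
section
variable {m κ J : Type} [Fintype m] [DecidableEq m] [Fintype κ] [DecidableEq κ] [Fintype J]

lemma EE_xs (θ : ℝ) (q : SS κ) : EE (cs θ) (xs * q) = Real.sin θ * EE (cs θ) q := by
  rw [EE_apply, EE_apply, ← integral_const_mul]
  simp [xs, evp, cs]

/-- derivative summand -/
lemma dec_deriv (R : J → Matrix m m ℝ) (F : κ → Matrix m m ℝ) (T : Matrix m m ℝ) (k l : ℕ) (θ : ℝ) :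
    HasDerivAt (fun t => ∑ j, EE (cs t) (trace (cm (R j) * PU F ^ k * cm (R j) * PV F ^ l * cm T)))
      (- Real.sin θ * ∑ i ∈ Finset.range l, ∑ i' ∈ Finset.range k, ∫ g, ∑ j, ∑ γ,
        trace (R j * (ev g (cs θ) (PU F)) ^ i' * F γ * (ev g (cs θ) (PU F)) ^ (k - 1 - i') * R j *
          (ev g (cs θ) (PV F)) ^ i * F γ * (ev g (cs θ) (PV F)) ^ (l - 1 - i) * T) ∂(gpi (κ ⊕ κ))) θ := by
  have h := HasDerivAt.fun_sum (u := Finset.univ) fun (j : J) _ =>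
    hasDerivAt_EE (trace (cm (R j) * PU F ^ k * cm (R j) * PV F ^ l * cm T)) θ
  refine h.congr_deriv ?_
  have h0 : ∀ j, (cm (R j) * PU F ^ k * cm (R j)).map Dth = 0 := by
    intro j
    simp only [map_der_mul, map_der_cm, map_der_pow, PU_Dth]
    simp
  have h1 : ∀ j γ, (cm (R j) * PU F ^ k * cm (R j)).map (dlt γ) =
      -((xs : SS κ) • ∑ i' ∈ Finset.range k, cm (R j) * PU F ^ i' * cm (F γ) * PU F ^ (k - 1 - i') * cm (R j)) := by
    intro j γ
    simp only [map_der_mul, map_der_cm, map_der_pow, PU_dlt]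
    simp only [Matrix.zero_mul, Matrix.mul_zero, zero_add, add_zero, Finset.mul_sum, Finset.sum_mul,
      Finset.smul_sum, ← Finset.sum_neg_distrib]
    refine Finset.sum_congr rfl fun i _ => ?_
    simp only [Matrix.mul_neg, Matrix.neg_mul, mul_smul_comm, smul_mul_assoc, Matrix.mul_assoc]
  have h2 : ∀ i i', ∫ g, ∑ j, ∑ γ,
        trace (R j * (ev g (cs θ) (PU F)) ^ i' * F γ * (ev g (cs θ) (PU F)) ^ (k - 1 - i') * R j *
          (ev g (cs θ) (PV F)) ^ i * F γ * (ev g (cs θ) (PV F)) ^ (l - 1 - i) * T) ∂(gpi (κ ⊕ κ)) =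
      ∑ j, ∑ γ, EE (cs θ) (trace (cm (R j) * PU F ^ i' * cm (F γ) * PU F ^ (k - 1 - i') * cm (R j) *
        PV F ^ i * cm (F γ) * PV F ^ (l - 1 - i) * cm T)) := by
    intro i i'
    have e : ∀ (g : κ ⊕ κ → ℝ) (j : J) (γ : κ), trace (R j * (ev g (cs θ) (PU F)) ^ i' * F γ * (ev g (cs θ) (PU F)) ^ (k - 1 - i') * R j *
          (ev g (cs θ) (PV F)) ^ i * F γ * (ev g (cs θ) (PV F)) ^ (l - 1 - i) * T) = 
        trace (ev g (cs θ) (cm (R j) * PU F ^ i' * cm (F γ) * PU F ^ (k - 1 - i') * cm (R j) *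
        PV F ^ i * cm (F γ) * PV F ^ (l - 1 - i) * cm T)) := by
      intro g j γ
      simp only [map_mul, map_pow, ev_cm]
    simp only [e]
    rw [integral_finsetSum]
    · refine Finset.sum_congr rfl fun j _ => ?_
      rw [EE_sum_trace]
    · intro j _
      exact integrable_finsetSum _ fun γ _ => integrable_trace_ev _ _
  simp only [h2]
  have h3 : ∀ j, EE (cs θ) (Dth (trace (cm (R j) * PU F ^ k * cm (R j) * PV F ^ l * cm T))) =
      ∑ i ∈ Finset.range l, ∑ i' ∈ Finset.range k, ∑ γ, - Real.sin θ *
        EE (cs θ) (trace (cm (R j) * PU F ^ i' * cm (F γ) * PU F ^ (k - 1 - i') * cm (R j) *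
        PV F ^ i * cm (F γ) * PV F ^ (l - 1 - i) * cm T)) := by
    intro j
    rw [Dth_main _ _ _ _ (h0 j) (fun D => map_der_cm D T)]
    rw [Finset.sum_comm]
    refine Finset.sum_congr rfl fun i _ => ?_
    rw [Finset.sum_comm (s := Finset.range k)]
    refine Finset.sum_congr rfl fun γ _ => ?_
    rw [h1]
    simp only [Matrix.neg_mul, smul_mul_assoc, trace_neg, trace_smul, smul_eq_mul, map_neg, EE_xs,
      Finset.sum_mul, trace_sum, map_sum, Finset.mul_sum, Finset.sum_neg_distrib, neg_mul]
  simp only [h3]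
  simp only [Finset.mul_sum]
  rw [Finset.sum_comm]
  refine Finset.sum_congr rfl fun i _ => ?_
  rw [Finset.sum_comm]

lemma ev_PU_symm (F : κ → Matrix m m ℝ) (hF : ∀ k, (F k)ᵀ = F k) (g : κ ⊕ κ → ℝ) (θ : ℝ) :
    (ev g (cs θ) (PU F))ᵀ = ev g (cs θ) (PU F) := by
  rw [ev_PU, gX_symm _ hF]

lemma ev_PV_symm (F : κ → Matrix m m ℝ) (hF : ∀ k, (F k)ᵀ = F k) (g : κ ⊕ κ → ℝ) (θ : ℝ) :
    (ev g (cs θ) (PV F))ᵀ = ev g (cs θ) (PV F) := by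
  rw [ev_PV, gX_symm _ hF]

lemma trace5 (A M B N T : Matrix m m ℝ) :
    trace (A * M * B * N * T) = ∑ a, ∑ b, ∑ c, ∑ d, (M a b * N c d) * (B b c * (T * A) d a) := by
  have : trace (A * M * B * N * T) = trace (M * (B * (N * (T * A)))) := by
    simp only [Matrix.mul_assoc]
    rw [trace_mul_comm]
    simp only [Matrix.mul_assoc]
  rw [this, trace_mul_eq]
  refine Finset.sum_congr rfl fun a _ => Finset.sum_congr rfl fun b _ => ?_
  rw [mul_apply, Finset.mul_sum]
  refine Finset.sum_congr rfl fun c _ => ?_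
  rw [mul_apply, Finset.mul_sum, Finset.mul_sum]
  refine Finset.sum_congr rfl fun d _ => ?_
  ring

lemma integrable_pow_entry (F : κ → Matrix m m ℝ) (k : ℕ) (a b : m) :
    Integrable (fun g => (gX F g ^ k) a b) (gpi κ) := by
  have := integrable_entry_ev (fun _ => 0) (PX F ^ k) a b
  simpa only [map_pow, ev_PX] using this

lemma dec_end (F : κ → Matrix m m ℝ) (A B T : Matrix m m ℝ) (k l : ℕ) :
    ∫ g : κ ⊕ κ → ℝ, trace (A * gX F (fun γ => g (Sum.inl γ)) ^ k * B * gX F (fun γ => g (Sum.inr γ)) ^ l * T)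
      ∂(gpi (κ ⊕ κ)) = trace (A * BB F k * B * BB F l * T) := by
  simp only [trace5]
  have hi : ∀ a b c d, Integrable (fun g : κ ⊕ κ → ℝ => (gX F (fun γ => g (Sum.inl γ)) ^ k) a b *
      (gX F (fun γ => g (Sum.inr γ)) ^ l) c d * (B b c * (T * A) d a)) (gpi (κ ⊕ κ)) := by
    intro a b c d
    refine Integrable.mul_const ?_ _
    have := integrable_eval_evp (κ := κ ⊕ κ) (cs (Real.pi / 2)) ((PU F ^ k) a b * (PV F ^ l) c d)
    simpa only [map_mul, ev_entry, map_pow, ev_PU, ev_PV, Real.cos_pi_div_two, Real.sin_pi_div_two,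
      zero_mul, one_mul, zero_add] using this
  rw [integral_finsetSum _ fun a _ => integrable_finsetSum _ fun b _ => integrable_finsetSum _ fun c _ =>
    integrable_finsetSum _ fun d _ => hi a b c d]
  refine Finset.sum_congr rfl fun a _ => ?_
  rw [integral_finsetSum _ fun b _ => integrable_finsetSum _ fun c _ =>
    integrable_finsetSum _ fun d _ => hi a b c d]
  refine Finset.sum_congr rfl fun b _ => ?_
  rw [integral_finsetSum _ fun c _ => integrable_finsetSum _ fun d _ => hi a b c d]
  refine Finset.sum_congr rfl fun c _ => ?_
  rw [integral_finsetSum _ fun d _ => hi a b c d]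
  refine Finset.sum_congr rfl fun d _ => ?_
  rw [integral_mul_const, gpi_indep (fun g => (gX F g ^ k) a b) (fun g => (gX F g ^ l) c d)]
  rfl

lemma decouple (R : J → Matrix m m ℝ) (F : κ → Matrix m m ℝ) (hF : ∀ k, (F k)ᵀ = F k)
    (T : Matrix m m ℝ) (k l q : ℕ) (a b : ℝ)
    (hb : ∀ X Z : Matrix m m ℝ, Xᵀ = X → Zᵀ = Z → ∀ k1 k2 k3 k4, k1 + k2 + k3 + k4 + 2 = k + l →
      |∑ j, ∑ γ, trace (R j * X ^ k1 * F γ * X ^ k2 * R j * Z ^ k3 * F γ * Z ^ k4 * T)| ≤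
        a + b * (trace (X ^ q) + trace (Z ^ q))) :
    |∫ g, ∑ j, trace (R j * gX F g ^ k * R j * gX F g ^ l * T) ∂(gpi κ) -
      ∑ j, trace (R j * BB F k * R j * BB F l * T)| ≤
      Real.pi / 2 * (k * l * (a + b * (2 * ∫ g, trace (gX F g ^ q) ∂(gpi κ)))) := by
  set E := ∫ g, trace (gX F g ^ q) ∂(gpi κ) with hE
  set φ := fun t => ∑ j, EE (cs t) (trace (cm (R j) * PU F ^ k * cm (R j) * PV F ^ l * cm T)) with hφ
  have h0 : φ 0 = ∫ g, ∑ j, trace (R j * gX F g ^ k * R j * gX F g ^ l * T) ∂(gpi κ) := by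
    simp only [hφ, EE_sum_trace, map_mul, map_pow, ev_cm, ev_PU, ev_PV, Real.cos_zero, Real.sin_zero,
      one_mul, zero_mul, add_zero]
    refine integral_inl (f := fun g => ∑ j, trace (R j * gX F g ^ k * R j * gX F g ^ l * T)) ?_
    exact continuous_finsetSum _ fun j _ => measurable_gX_trace F _ _ _ _ _
  have h1 : φ (Real.pi / 2) = ∑ j, trace (R j * BB F k * R j * BB F l * T) := by
    simp only [hφ, EE_trace, map_mul, map_pow, ev_cm, ev_PU, ev_PV, Real.cos_pi_div_two,
      Real.sin_pi_div_two, one_mul, zero_mul, zero_add, dec_end]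
  have iX : ∀ θ, Integrable (fun g => trace (ev g (cs θ) (PU F) ^ q)) (gpi (κ ⊕ κ)) := fun θ => by
    have := integrable_trace_ev (cs θ) (PU F ^ q)
    simpa only [map_pow] using this
  have iZ : ∀ θ, Integrable (fun g => trace (ev g (cs θ) (PV F) ^ q)) (gpi (κ ⊕ κ)) := fun θ => by
    have := integrable_trace_ev (cs θ) (PV F ^ q)
    simpa only [map_pow] using this
  have eX : ∀ θ, ∫ g, trace (ev g (cs θ) (PU F) ^ q) ∂(gpi (κ ⊕ κ)) = E := fun θ => by
    simp only [ev_PU]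
    refine integral_inl (f := fun g => trace (gX F g ^ q)) ?_
    have := measurable_gX_trace F 1 1 1 q 0
    simpa using this
  have hbound : ∀ θ, ∀ i ∈ Finset.range l, ∀ i' ∈ Finset.range k, |∫ g, ∑ j, ∑ γ,
        trace (R j * (ev g (cs θ) (PU F)) ^ i' * F γ * (ev g (cs θ) (PU F)) ^ (k - 1 - i') * R j *
          (ev g (cs θ) (PV F)) ^ i * F γ * (ev g (cs θ) (PV F)) ^ (l - 1 - i) * T) ∂(gpi (κ ⊕ κ))| ≤
        a + b * (2 * E) := by
    intro θ i hi i' hi'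
    have hi := Finset.mem_range.1 hi
    have hi' := Finset.mem_range.1 hi'
    have hintgr : Integrable (fun g => a + b * (trace (ev g (cs θ) (PU F) ^ q) + trace (ev g (cs θ) (PV F) ^ q)))
        (gpi (κ ⊕ κ)) := (integrable_const a).add (((iX θ).fun_add (iZ θ)).const_mul b)
    rw [← Real.norm_eq_abs]
    refine (norm_integral_le_of_norm_le hintgr ?_).trans (le_of_eq ?_)
    · filter_upwards with g
      rw [Real.norm_eq_abs]
      exact hb _ _ (ev_PU_symm F hF g θ) (ev_PV_symm F hF g θ) _ _ _ _ (by omega)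
    · rw [integral_add (integrable_const a) (((iX θ).fun_add (iZ θ)).const_mul b), integral_const_mul,
        integral_add (iX θ) (iZ θ), eX, integral_PV_pow, ← hE, integral_const, probReal_univ, one_smul]
      ring
  have hd := fun θ => dec_deriv R F T k l θ
  have hle := Convex.norm_image_sub_le_of_norm_hasDerivWithin_le (f := φ) (C := k * l * (a + b * (2 * E)))
    (s := Set.univ) (x := Real.pi / 2) (y := 0) (fun θ _ => (hd θ).hasDerivWithinAt) ?_ convex_univ
    (Set.mem_univ _) (Set.mem_univ _)
  · rw [h0, h1, Real.norm_eq_abs, Real.norm_eq_abs, zero_sub, abs_neg, abs_of_nonneg (show 0 ≤ Real.pi / 2 by positivity)] at hle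
    linarith
  · intro θ _
    rw [norm_mul, norm_neg, Real.norm_eq_abs, Real.norm_eq_abs]
    have hs := Real.abs_sin_le_one θ
    have : |∑ i ∈ Finset.range l, ∑ i' ∈ Finset.range k, ∫ g, ∑ j, ∑ γ,
        trace (R j * (ev g (cs θ) (PU F)) ^ i' * F γ * (ev g (cs θ) (PU F)) ^ (k - 1 - i') * R j *
          (ev g (cs θ) (PV F)) ^ i * F γ * (ev g (cs θ) (PV F)) ^ (l - 1 - i) * T) ∂(gpi (κ ⊕ κ))| ≤
        ∑ i ∈ Finset.range l, ∑ i' ∈ Finset.range k, (a + b * (2 * E)) := by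
      refine (Finset.abs_sum_le_sum_abs _ _).trans (Finset.sum_le_sum fun i hi => ?_)
      refine (Finset.abs_sum_le_sum_abs _ _).trans (Finset.sum_le_sum fun i' hi' => ?_)
      exact hbound θ i hi i' hi'
    refine (mul_le_of_le_one_left (abs_nonneg _) hs).trans (this.trans (le_of_eq ?_))
    simp
    ring

end
end PartFile9

section PartFile10
open MeasureTheory ProbabilityTheory Matrix
set_option linter.unusedSectionVars false
set_option linter.unusedSimpArgs false
section
variable {m κ J : Type} [Fintype m] [DecidableEq m] [Fintype κ] [DecidableEq κ] [Fintype J]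
variable {R : J → Matrix m m ℝ} {F : κ → Matrix m m ℝ} {vR sR vF sF : ℝ}

lemma dec_trace (hR : HP R vR sR) (hF : HP F vF sF) (k l n : ℕ) (hn : n + 2 = k + l) (hev : Even n) :
    |∫ g, ∑ j, trace (R j * gX F g ^ k * R j * gX F g ^ l) ∂(gpi κ) -
      ∑ j, trace (R j * BB F k * R j * BB F l)| ≤
      Real.pi / 2 * (k * l * (vR * sR * (vF * sF) * (4 * ∫ g, trace (gX F g ^ n) ∂(gpi κ)))) := by
  have h := decouple R F hF.symm 1 k l n 0 (2 * (vR * sR * (vF * sF))) ?_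
  · simp only [Matrix.mul_one, zero_add] at h
    refine h.trans (le_of_eq ?_)
    ring
  · intro X Z hX hZ k1 k2 k3 k4 hk
    have := cross_trace hR hF X Z hX hZ k1 k2 k3 k4 n (by omega) hev
    simp only [Matrix.mul_one]
    refine this.trans (le_of_eq ?_)
    ring

lemma trace_vecMulVec' (M : Matrix m m ℝ) (x y : m → ℝ) : trace (M * vecMulVec y x) = x ⬝ᵥ (M *ᵥ y) := by
  rw [mul_vecMulVec, trace_vecMulVec, dotProduct_comm]

lemma dec_vec [Nonempty m] (hR : HP R vR sR) (hF : HP F vF sF) (k l n : ℕ) (hn : n + 2 = k + l)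
    (x y : m → ℝ) (t : ℝ) (ht : 0 < t) :
    |∫ g, ∑ j, x ⬝ᵥ ((R j * gX F g ^ k * R j * gX F g ^ l) *ᵥ y) ∂(gpi κ) -
      ∑ j, x ⬝ᵥ ((R j * BB F k * R j * BB F l) *ᵥ y)| ≤
      Real.pi / 2 * (k * l * (vR * sR * (vF * sF) * (√(x ⬝ᵥ x) * √(y ⬝ᵥ y)) *
        (t + 2 * (∫ g, trace (gX F g ^ (2 * n)) ∂(gpi κ)) / t))) := by
  have h := decouple R F hF.symm (vecMulVec y x) k l (2 * n)
    (vR * sR * (vF * sF) * (√(x ⬝ᵥ x) * √(y ⬝ᵥ y)) * t)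
    (vR * sR * (vF * sF) * (√(x ⬝ᵥ x) * √(y ⬝ᵥ y)) / t) ?_
  · simp only [trace_vecMulVec'] at h
    refine h.trans (le_of_eq ?_)
    ring
  · intro X Z hX hZ k1 k2 k3 k4 hk
    have := cross_vec hR hF X Z hX hZ k1 k2 k3 k4 n (by omega) x y t ht
    simp only [trace_vecMulVec']
    refine this.trans (le_of_eq ?_)
    ring

end

section
variable {m κ J : Type} [Fintype m] [DecidableEq m] [Fintype κ] [DecidableEq κ] [Fintype J] [DecidableEq J]

noncomputable def fam (θ : ℝ) (P : J → Matrix m m ℝ) (Q : κ → Matrix m m ℝ) : J ⊕ κ → Matrix m m ℝ :=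
  Sum.elim (fun γ => Real.cos θ • P γ) (fun γ => Real.sin θ • Q γ)

noncomputable def PW (P : J → Matrix m m ℝ) (Q : κ → Matrix m m ℝ) :
    Matrix m m (MvPolynomial ((J ⊕ κ) ⊕ Bool) ℝ) :=
  ∑ γ, (MvPolynomial.X (Sum.inr false) * MvPolynomial.X (Sum.inl (Sum.inl γ)) : MvPolynomial ((J ⊕ κ) ⊕ Bool) ℝ) • cm (P γ) +
  ∑ γ, (MvPolynomial.X (Sum.inr true) * MvPolynomial.X (Sum.inl (Sum.inr γ)) : MvPolynomial ((J ⊕ κ) ⊕ Bool) ℝ) • cm (Q γ)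

lemma ev_PW (P : J → Matrix m m ℝ) (Q : κ → Matrix m m ℝ) (g : J ⊕ κ → ℝ) (θ : ℝ) :
    ev g (cs θ) (PW P Q) = gX (fam θ P Q) g := by
  simp only [PW, gX, fam, map_add, map_sum, ev_smul, ev_cm, map_mul, MvPolynomial.eval_X, evp,
    Sum.elim_inl, Sum.elim_inr, cs, cond_true, cond_false, Fintype.sum_sum_type, smul_smul]
  congr 1 <;> exact Finset.sum_congr rfl fun γ _ => by rw [mul_comm]

lemma map_der_add {S : Type} [CommRing S] [Algebra ℝ S] (D : Derivation ℝ S S) (A B : Matrix m m S) :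
    (A + B).map D = A.map D + B.map D := by
  ext i j; simp

lemma PW_Dth (P : J → Matrix m m ℝ) (Q : κ → Matrix m m ℝ) : (PW P Q).map Dth =
  ∑ γ, (MvPolynomial.X (Sum.inl (Sum.inl γ)) * - MvPolynomial.X (Sum.inr true) : MvPolynomial ((J ⊕ κ) ⊕ Bool) ℝ) • cm (P γ) +
  ∑ γ, (MvPolynomial.X (Sum.inl (Sum.inr γ)) * MvPolynomial.X (Sum.inr false) : MvPolynomial ((J ⊕ κ) ⊕ Bool) ℝ) • cm (Q γ) := by
  rw [PW, map_der_add, map_der_sum, map_der_sum]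
  congr 1 <;> refine Finset.sum_congr rfl fun γ _ => ?_ <;> rw [map_der_smul_cm] <;> congr 1 <;>
  simp [Dth, MvPolynomial.pderiv_X, Derivation.leibniz]

lemma PW_pl (P : J → Matrix m m ℝ) (Q : κ → Matrix m m ℝ) (γ : J) :
    (PW P Q).map (MvPolynomial.pderiv (Sum.inl (Sum.inl γ))) = 
    (MvPolynomial.X (Sum.inr false) : MvPolynomial ((J ⊕ κ) ⊕ Bool) ℝ) • cm (P γ) := by
  rw [PW, map_der_add, map_der_sum, map_der_sum]
  simp only [map_der_smul_cm]
  rw [Finset.sum_eq_single γ, Finset.sum_eq_zero]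
  · simp [MvPolynomial.pderiv_X, Derivation.leibniz]
  · intro b _
    simp [MvPolynomial.pderiv_X, Derivation.leibniz]
  · intro b _ hb
    simp [MvPolynomial.pderiv_X, Derivation.leibniz, Pi.single_apply, hb]
  · simp

lemma PW_pr (P : J → Matrix m m ℝ) (Q : κ → Matrix m m ℝ) (γ : κ) :
    (PW P Q).map (MvPolynomial.pderiv (Sum.inl (Sum.inr γ))) = 
    (MvPolynomial.X (Sum.inr true) : MvPolynomial ((J ⊕ κ) ⊕ Bool) ℝ) • cm (Q γ) := by
  rw [PW, map_der_add, map_der_sum, map_der_sum]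
  simp only [map_der_smul_cm]
  rw [Finset.sum_eq_zero, Finset.sum_eq_single γ]
  · simp [MvPolynomial.pderiv_X, Derivation.leibniz]
  · intro b _ hb
    simp [MvPolynomial.pderiv_X, Derivation.leibniz, Pi.single_apply, hb]
  · simp
  · intro b _
    simp [MvPolynomial.pderiv_X, Derivation.leibniz]

lemma pw_ibp {K : Type} [Fintype K] [DecidableEq K] (θ : ℝ) (γ : K) (u z : Bool) (e : ℝ)
    (W A : Matrix m m (MvPolynomial (K ⊕ Bool) ℝ)) (n : ℕ)
    (hA : A.map (MvPolynomial.pderiv (Sum.inl γ)) = 0)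
    (hW : W.map (MvPolynomial.pderiv (Sum.inl γ)) = (MvPolynomial.X (Sum.inr z) : MvPolynomial (K ⊕ Bool) ℝ) • A) :
    EE (cs θ) (trace ((MvPolynomial.X (Sum.inl γ) * (MvPolynomial.C e * MvPolynomial.X (Sum.inr u))
        : MvPolynomial (K ⊕ Bool) ℝ) • A * W ^ n)) =
      e * cs θ u * cs θ z * ∑ i ∈ Finset.range n, ∫ g, trace (ev g (cs θ) (A * W ^ i * A * W ^ (n - 1 - i))) ∂(gpi K) := by
  rw [smul_mul_assoc, trace_smul, smul_eq_mul, mul_assoc, EE_ibp]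
  have : MvPolynomial.pderiv (Sum.inl γ) ((MvPolynomial.C e * MvPolynomial.X (Sum.inr u)) * trace (A * W ^ n)) =
    ∑ i ∈ Finset.range n, (MvPolynomial.C e * MvPolynomial.X (Sum.inr u)  * MvPolynomial.X (Sum.inr z)) * trace (A * W ^ i * A * W ^ (n - 1 - i)) := by
    rw [Derivation.leibniz, map_der_trace, map_der_mul, hA, map_der_pow, hW]
    simp [Derivation.leibniz, MvPolynomial.pderiv_X, Finset.mul_sum, trace_sum, mul_assoc]
  rw [this, map_sum, Finset.mul_sum]
  refine Finset.sum_congr rfl fun i _ => ?_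
  rw [EE_apply, ← integral_const_mul]
  refine integral_congr_ae ?_
  filter_upwards with g
  rw [map_mul, ev_trace]
  simp [evp]

lemma phase1_deriv (P : J → Matrix m m ℝ) (Q : κ → Matrix m m ℝ) (n : ℕ) (θ : ℝ) :
    HasDerivAt (fun t => ∫ g, trace (gX (fam t P Q) g ^ (n + 1)) ∂(gpi (J ⊕ κ)))
      ((n + 1) * (Real.sin θ * Real.cos θ) * ∑ i ∈ Finset.range n,
        (∫ g, ∑ γ, trace (Q γ * gX (fam θ P Q) g ^ i * Q γ * gX (fam θ P Q) g ^ (n - 1 - i)) ∂(gpi (J ⊕ κ)) -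
         ∫ g, ∑ γ, trace (P γ * gX (fam θ P Q) g ^ i * P γ * gX (fam θ P Q) g ^ (n - 1 - i)) ∂(gpi (J ⊕ κ)))) θ := by
  have h := hasDerivAt_EE (trace (PW P Q ^ (n + 1))) θ
  simp only [EE_trace, map_pow, ev_PW] at h
  refine h.congr_deriv ?_
  have e1 : Dth (trace (PW P Q ^ (n + 1))) = ((n + 1 : ℕ) : ℝ) • trace ((PW P Q).map Dth * PW P Q ^ n) := by
    rw [map_der_trace, map_der_pow, trace_sum]
    rw [Finset.sum_congr rfl (g := fun _ => trace ((PW P Q).map Dth * PW P Q ^ n))]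
    · rw [Finset.sum_const, Finset.card_range, Nat.cast_smul_eq_nsmul]
    · intro i hi
      have := Finset.mem_range.1 hi
      rw [Matrix.mul_assoc, trace_mul_comm, Matrix.mul_assoc, ← pow_add]
      congr 3
      omega
  have hintgr : ∀ (A : Matrix m m ℝ) i, Integrable (fun g => trace (A * gX (fam θ P Q) g ^ i * A * gX (fam θ P Q) g ^ (n - 1 - i))) (gpi (J ⊕ κ)) := by
    intro A i
    have := integrable_trace_ev (cs θ) (cm A * PW P Q ^ i * cm A * PW P Q ^ (n - 1 - i))
    simpa only [map_mul, map_pow, ev_cm, ev_PW] using this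
  have e2 : EE (cs θ) (trace ((PW P Q).map Dth * PW P Q ^ n)) = 
    (Real.sin θ * Real.cos θ) * ∑ i ∈ Finset.range n,
        (∫ g, ∑ γ, trace (Q γ * gX (fam θ P Q) g ^ i * Q γ * gX (fam θ P Q) g ^ (n - 1 - i)) ∂(gpi (J ⊕ κ)) -
         ∫ g, ∑ γ, trace (P γ * gX (fam θ P Q) g ^ i * P γ * gX (fam θ P Q) g ^ (n - 1 - i)) ∂(gpi (J ⊕ κ))) := by
    have hP : ∀ γ, EE (cs θ) (trace ((MvPolynomial.X (Sum.inl (Sum.inl γ)) * - MvPolynomial.X (Sum.inr true) : MvPolynomial ((J ⊕ κ) ⊕ Bool) ℝ) • cm (P γ) * PW P Q ^ n)) = - (Real.sin θ * Real.cos θ) * ∑ i ∈ Finset.range n, ∫ g, trace (P γ * gX (fam θ P Q) g ^ i * P γ * gX (fam θ P Q) g ^ (n - 1 - i)) ∂(gpi (J ⊕ κ)) := by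
      intro γ
      have := pw_ibp θ (Sum.inl γ) true false (-1) (PW P Q) (cm (P γ)) n (map_der_cm _ _) (PW_pl P Q γ)
      simpa [map_mul, map_pow, ev_cm, ev_PW, cs] using this
    have hQ : ∀ γ, EE (cs θ) (trace ((MvPolynomial.X (Sum.inl (Sum.inr γ)) * MvPolynomial.X (Sum.inr false) : MvPolynomial ((J ⊕ κ) ⊕ Bool) ℝ) • cm (Q γ) * PW P Q ^ n)) = (Real.sin θ * Real.cos θ) * ∑ i ∈ Finset.range n, ∫ g, trace (Q γ * gX (fam θ P Q) g ^ i * Q γ * gX (fam θ P Q) g ^ (n - 1 - i)) ∂(gpi (J ⊕ κ)) := by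
      intro γ
      have := pw_ibp θ (Sum.inr γ) false true 1 (PW P Q) (cm (Q γ)) n (map_der_cm _ _) (PW_pr P Q γ)
      simpa [map_mul, map_pow, ev_cm, ev_PW, cs, mul_comm (Real.sin θ)] using this
    rw [PW_Dth, Matrix.add_mul, trace_add, map_add, Finset.sum_mul, Finset.sum_mul, trace_sum, trace_sum,
      map_sum, map_sum]
    simp only [hP, hQ]
    rw [Finset.sum_sub_distrib, ← Finset.mul_sum, ← Finset.mul_sum, Finset.sum_comm,
      Finset.sum_comm (s := (Finset.univ : Finset κ))]
    simp only [integral_finsetSum _ fun γ _ => hintgr (P γ) _, integral_finsetSum _ fun γ _ => hintgr (Q γ) _]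
    ring
  rw [e1, map_smul, e2, smul_eq_mul]
  push_cast
  ring
end
end PartFile10

section PartFile11
open MeasureTheory ProbabilityTheory Matrix
set_option linter.unusedSectionVars false
set_option linter.unusedSimpArgs false
section
variable {m ν ι c : Type} [Fintype m] [DecidableEq m] [Fintype ν] [DecidableEq ν] [Fintype ι] [Fintype c]

lemma HP.mono {R : ι → Matrix m m ℝ} {v s v' : ℝ} (h : HP R v s) (hv : v ≤ v') : HP R v' s where
  symm := h.symm
  hv0 := h.hv0.trans hv
  hs0 := h.hs0
  hs := h.hs
  hv B := (h.hv B).trans (mul_le_mul_of_nonneg_right (pow_le_pow_left₀ h.hv0 hv 2)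
    (Finset.sum_nonneg fun _ _ => Finset.sum_nonneg fun _ _ => sq_nonneg _))

/-- tensor product of families -/
def tens (A : ι → Matrix m m ℝ) (H : c → Matrix ν ν ℝ) : ι × c → Matrix (m × ν) (m × ν) ℝ :=
  fun p => kronecker (A p.1) (H p.2)

structure HH (H : c → Matrix ν ν ℝ) (h : ℝ) : Prop where
  symm : ∀ j, (H j)ᵀ = H j
  h0 : 0 ≤ h
  one : ∑ j, H j * H j = 1
  hv : ∀ B : Matrix ν ν ℝ, ∑ j, (∑ a, ∑ b, H j a b * B a b) ^ 2 ≤ h ^ 2 * frobNormSq B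

lemma tens_HP {A : ι → Matrix m m ℝ} {v s : ℝ} (hA : HP A v s) {H : c → Matrix ν ν ℝ} {h : ℝ}
    (hH : HH H h) : HP (tens A H) (v * h) s where
  symm p := by
    ext ⟨i, a⟩ ⟨j, b⟩
    have h1 := congrFun (congrFun (hA.symm p.1) i) j
    have h2 := congrFun (congrFun (hH.symm p.2) a) b
    simp only [transpose_apply] at h1 h2
    simp [tens, kronecker, h1, h2]
  hv0 := mul_nonneg hA.hv0 hH.h0
  hs0 := hA.hs0
  hv B := by
    set C : c → Matrix m m ℝ := fun k => Matrix.of fun i j => ∑ a, ∑ b, H k a b * B (i, a) (j, b) with hC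
    have e1 : ∀ (i : ι) (k : c), ∑ p, ∑ q, tens A H (i, k) p q * B p q = ∑ a, ∑ b, A i a b * C k a b := by
      intro i k
      simp only [Fintype.sum_prod_type, tens, kronecker, kroneckerMap_apply, hC, of_apply, Finset.mul_sum]
      refine Finset.sum_congr rfl fun x _ => ?_
      rw [Finset.sum_comm]
      refine Finset.sum_congr rfl fun y _ => Finset.sum_congr rfl fun a _ => 
        Finset.sum_congr rfl fun b _ => ?_
      ring
    rw [Fintype.sum_prod_type, Finset.sum_comm]
    simp only [e1]
    have e2 : ∀ k, ∑ i, (∑ a, ∑ b, A i a b * C k a b) ^ 2 ≤ v ^ 2 * frobNormSq (C k) := fun k => hA.hv _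
    refine (Finset.sum_le_sum fun k _ => e2 k).trans ?_
    rw [← Finset.mul_sum, mul_pow, mul_assoc]
    refine mul_le_mul_of_nonneg_left ?_ (sq_nonneg _)
    simp only [frobNormSq]
    rw [Finset.sum_comm]
    simp only [Fintype.sum_prod_type]
    rw [Finset.mul_sum]
    refine Finset.sum_le_sum fun i _ => ?_
    rw [Finset.sum_comm, Finset.sum_comm (f := fun (a : ν) (j : m) => ∑ b, B (i, a) (j, b) ^ 2), Finset.mul_sum]
    refine Finset.sum_le_sum fun j _ => ?_
    exact hH.hv (Matrix.of fun a b => B (i, a) (j, b))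
  hs x := by
    have e : ∀ p, (tens A H p *ᵥ x) ⬝ᵥ (tens A H p *ᵥ x) = x ⬝ᵥ (kronecker (A p.1 * A p.1) (H p.2 * H p.2) *ᵥ x) := by
      intro p
      have hsy : (tens A H p)ᵀ = tens A H p := by
        ext ⟨i, a⟩ ⟨j, b⟩
        have h1 := congrFun (congrFun (hA.symm p.1) i) j
        have h2 := congrFun (congrFun (hH.symm p.2) a) b
        simp only [transpose_apply] at h1 h2
        simp [tens, kronecker, h1, h2]
      rw [show kronecker (A p.1 * A p.1) (H p.2 * H p.2) = tens A H p * tens A H p from 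
        (mul_kronecker_mul _ _ _ _), ← mulVec_mulVec, dotProduct_mulVec, dotProduct_mulVec, dotProduct_comm, ← mulVec_transpose, hsy, dotProduct_mulVec,
        ← mulVec_transpose, hsy, dotProduct_comm]
    simp only [e]
    rw [Fintype.sum_prod_type]
    have e2 : ∀ i, ∑ k, x ⬝ᵥ (kronecker (A i * A i) (H k * H k) *ᵥ x) = 
      ∑ b, (A i *ᵥ fun k => x (k, b)) ⬝ᵥ (A i *ᵥ fun k => x (k, b)) := by
      intro i
      rw [← dotProduct_sum, ← sum_mulVec]
      have : ∑ k, kronecker (A i * A i) (H k * H k) = kronecker (A i * A i) (1 : Matrix ν ν ℝ) := by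
        rw [← hH.one]
        ext ⟨i, a⟩ ⟨j, b⟩
        simp [kronecker, Matrix.sum_apply, Finset.mul_sum]
      rw [this]
      have e3 : ∀ w : m → ℝ, (A i *ᵥ w) ⬝ᵥ (A i *ᵥ w) = w ⬝ᵥ ((A i * A i) *ᵥ w) := by
        intro w
        rw [← mulVec_mulVec, dotProduct_mulVec, ← mulVec_transpose, hA.symm, dotProduct_comm]
      simp only [e3]
      simp only [dotProduct, mulVec, Fintype.sum_prod_type, kronecker, kroneckerMap_apply, one_apply]
      rw [Finset.sum_comm]
      refine Finset.sum_congr rfl fun b _ => Finset.sum_congr rfl fun j _ => ?_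
      simp
    simp only [e2]
    rw [Finset.sum_comm]
    refine (Finset.sum_le_sum fun b _ => hA.hs _).trans (le_of_eq ?_)
    rw [← Finset.mul_sum]
    simp only [dotProduct, Fintype.sum_prod_type]
    rw [Finset.sum_comm]


/-- diagonal units -/
def Hd (ν : Type) [DecidableEq ν] : ν → Matrix ν ν ℝ := fun a => Matrix.single a a 1

lemma Hd_HH : HH (Hd ν) 1 where
  symm j := by simp [Hd]
  h0 := zero_le_one
  one := by
    ext a b
    simp only [Hd, Matrix.sum_apply, single_mul_single_same, single_apply, one_apply, ite_and]
    simp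
  hv B := by
    simp only [Hd, single_apply, frobNormSq]
    simp [ite_and]
    refine Finset.sum_le_sum fun a _ => ?_
    exact Finset.single_le_sum (f := fun b => B a b ^ 2) (fun _ _ => sq_nonneg _) (Finset.mem_univ a)

/-- symmetrized units -/
noncomputable def Ho (ν : Type) [DecidableEq ν] [Fintype ν] : ν × ν → Matrix ν ν ℝ :=
  fun p => (1 / √(2 * (Fintype.card ν : ℝ) + 2)) • (Matrix.single p.1 p.2 1 + Matrix.single p.2 p.1 1)

lemma Ho_HH : HH (Ho ν) (√(2 / ((Fintype.card ν : ℝ) + 1))) where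
  symm j := by simp [Ho, add_comm]
  h0 := Real.sqrt_nonneg _
  one := by
    have h2 : (0:ℝ) < 2 * (Fintype.card ν : ℝ) + 2 := by positivity
    have e : ∀ p : ν × ν, Ho ν p * Ho ν p = (1 / (2 * (Fintype.card ν : ℝ) + 2)) • 
       ((single p.1 p.2 1 * single p.1 p.2 1 + single p.1 p.2 1 * single p.2 p.1 1) + 
        (single p.2 p.1 1 * single p.1 p.2 1 + single p.2 p.1 1 * single p.2 p.1 1)) := by
      intro p
      simp only [Ho, smul_mul_assoc, mul_smul_comm, smul_smul]
      congr 1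
      · rw [div_mul_div_comm, Real.mul_self_sqrt h2.le, one_mul]
      · simp only [Matrix.add_mul, Matrix.mul_add]
        abel
    simp only [e]
    rw [← Finset.smul_sum]
    ext a b
    simp only [Matrix.smul_apply, Matrix.sum_apply, Matrix.add_apply, Finset.sum_add_distrib, Fintype.sum_prod_type]
    simp [mul_apply, single_apply, ite_and, one_apply]
    by_cases hab : a = b
    · simp only [hab, if_true]
      field_simp
      ring
    · simp [hab, Ne.symm hab]
  hv B := by
    have h2 : (0:ℝ) < 2 * (Fintype.card ν : ℝ) + 2 := by positivity
    have e : ∀ p : ν × ν, ∑ a, ∑ b, Ho ν p a b * B a b = (1 / √(2 * (Fintype.card ν : ℝ) + 2)) * (B p.1 p.2 + B p.2 p.1) := by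
      intro p
      simp only [Ho, Matrix.smul_apply, Matrix.add_apply, single_apply, smul_eq_mul, mul_assoc, ← Finset.mul_sum, 
        add_mul, Finset.sum_add_distrib]
      simp [ite_and]
    simp only [e, mul_pow, ← Finset.mul_sum, one_div, inv_pow]
    rw [Real.sq_sqrt h2.le, Real.sq_sqrt (by positivity)]
    have : ∑ p : ν × ν, (B p.1 p.2 + B p.2 p.1) ^ 2 ≤ 4 * frobNormSq B := by
      have h3 : ∀ p : ν × ν, (B p.1 p.2 + B p.2 p.1) ^ 2 ≤ 2 * B p.1 p.2 ^ 2 + 2 * B p.2 p.1 ^ 2 := by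
        intro p; nlinarith [sq_nonneg (B p.1 p.2 - B p.2 p.1)]
      refine (Finset.sum_le_sum fun p _ => h3 p).trans (le_of_eq ?_)
      rw [Finset.sum_add_distrib, ← Finset.mul_sum, ← Finset.mul_sum, Fintype.sum_prod_type, Fintype.sum_prod_type, frobNormSq]
      rw [Finset.sum_comm (f := fun x y => B y x ^ 2)]
      ring
    refine (mul_le_mul_of_nonneg_left this (by positivity)).trans (le_of_eq ?_)
    field_simp
    ring

lemma fam_HP {κ J : Type} [Fintype κ] [Fintype J] {P : J → Matrix m m ℝ} {Q : κ → Matrix m m ℝ} {v s : ℝ} 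
    (hP : HP P v s) (hQ : HP Q v s) (θ : ℝ) : HP (fam θ P Q) v s where
  symm j := by rcases j with j | j <;> simp [fam, hP.symm, hQ.symm]
  hv0 := hP.hv0
  hs0 := hP.hs0
  hv B := by
    have h1 := mul_le_mul_of_nonneg_left (hP.hv B) (sq_nonneg (Real.cos θ))
    have h2 := mul_le_mul_of_nonneg_left (hQ.hv B) (sq_nonneg (Real.sin θ))
    rw [Fintype.sum_sum_type]
    simp only [fam, Sum.elim_inl, Sum.elim_inr, Matrix.smul_apply, smul_eq_mul, mul_assoc, ← Finset.mul_sum, mul_pow]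
    have := Real.sin_sq_add_cos_sq θ
    refine (add_le_add h1 h2).trans (le_of_eq ?_)
    rw [← add_mul, add_comm, this, one_mul]
  hs x := by
    have h1 := mul_le_mul_of_nonneg_left (hP.hs x) (sq_nonneg (Real.cos θ))
    have h2 := mul_le_mul_of_nonneg_left (hQ.hs x) (sq_nonneg (Real.sin θ))
    rw [Fintype.sum_sum_type]
    simp only [fam, Sum.elim_inl, Sum.elim_inr, smul_mulVec, dotProduct_smul, smul_dotProduct, smul_eq_mul, ← mul_assoc,
      ← sq, ← Finset.mul_sum]
    have := Real.sin_sq_add_cos_sq θ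
    refine (add_le_add h1 h2).trans (le_of_eq ?_)
    rw [← add_mul, add_comm, this, one_mul]
end
end PartFile11

section PartFile12
open MeasureTheory ProbabilityTheory Matrix
set_option linter.unusedSectionVars false
set_option linter.unusedSimpArgs false
section
variable {m κ J : Type} [Fintype m] [DecidableEq m] [Fintype κ] [DecidableEq κ] 

lemma submatrix_pow_equiv (X : Matrix m m ℝ) (f : m ≃ m) (n : ℕ) : (X ^ n).submatrix f f = (X.submatrix f f) ^ n := by
  induction n with
  | zero => simp
  | succ n ih => rw [pow_succ, pow_succ, ← ih, submatrix_mul_equiv]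

lemma gX_continuous (F : κ → Matrix m m ℝ) : Continuous (fun g => gX F g) := by
  unfold gX
  fun_prop

lemma BB_sub (F : κ → Matrix m m ℝ) (e : κ ≃ κ) (f : m ≃ m) (h : ∀ k, (F k).submatrix f f = F (e k)) (n : ℕ)
    (i j : m) : BB F n (f i) (f j) = BB F n i j := by
  have h1 : ∀ g, (gX F g).submatrix f f = gX F (fun k => g (e.symm k)) := by
    intro g
    have : (gX F g).submatrix f f = ∑ k, g k • (F k).submatrix f f := by
      ext i j
      simp [gX, Matrix.sum_apply]
    rw [this, gX, ← Equiv.sum_comp e (fun k => g (e.symm k) • F k)]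
    simp [h]
  simp only [BB, of_apply]
  have hmp := gpi_map_inj e.symm e.symm.injective
  conv_rhs => rw [← hmp.map_eq]
  rw [integral_map hmp.measurable.aemeasurable]
  · refine integral_congr_ae ?_
    filter_upwards with g
    rw [← h1, ← submatrix_pow_equiv, submatrix_apply]
  · rw [hmp.map_eq]
    exact (integrable_pow_entry F n i j).aestronglyMeasurable

lemma BB_sign (F : κ → Matrix m m ℝ) (s : κ → ℝ) (hs : ∀ k, s k = 1 ∨ s k = -1) (ε : m → ℝ) (hε : ∀ i, ε i * ε i = 1)
    (h : ∀ k i j, ε i * F k i j * ε j = s k * F k i j) (n : ℕ) (i j : m) :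
    BB F n i j = ε i * BB F n i j * ε j := by
  have h1 : ∀ g, gX F (fun k => s k * g k) = diagonal ε * gX F g * diagonal ε := by
    intro g
    ext i j
    simp only [gX, mul_diagonal, diagonal_mul, Matrix.sum_apply, Matrix.smul_apply, smul_eq_mul, Finset.mul_sum,
      Finset.sum_mul]
    refine Finset.sum_congr rfl fun k _ => ?_
    rw [mul_comm (s k), mul_assoc, ← h]
    ring
  have hd : diagonal ε * diagonal ε = (1 : Matrix m m ℝ) := by
    rw [diagonal_mul_diagonal]; simp [hε]
  have h2 : ∀ (X : Matrix m m ℝ) n, (diagonal ε * X * diagonal ε) ^ n = diagonal ε * X ^ n * diagonal ε := by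
    intro X n
    induction n with
    | zero => simp [hd]
    | succ n ih => 
      rw [pow_succ, ih, pow_succ]
      calc _ = diagonal ε * X ^ n * (diagonal ε * diagonal ε) * X * diagonal ε := by simp only [Matrix.mul_assoc]
        _ = _ := by rw [hd, Matrix.mul_one]; simp only [Matrix.mul_assoc]
  simp only [BB, of_apply]
  rw [← integral_const_mul, ← integral_mul_const]
  have hmp := gpi_map_sign s hs
  conv_lhs => rw [← hmp.map_eq]
  rw [integral_map hmp.measurable.aemeasurable]
  · refine integral_congr_ae ?_
    filter_upwards with g
    rw [h1, h2, mul_diagonal, diagonal_mul]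
  · rw [hmp.map_eq]
    exact (integrable_pow_entry F n i j).aestronglyMeasurable

lemma BB_odd (F : κ → Matrix m m ℝ) (n : ℕ) (hn : Odd n) : BB F n = 0 := by
  have h1 : ∀ g : κ → ℝ, gX F (fun k => (-1) * g k) = - gX F g := by
    intro g
    simp [gX]
  ext i j
  have hmp := gpi_map_sign (fun _ : κ => (-1:ℝ)) (fun _ => Or.inr rfl)
  have : BB F n i j = - BB F n i j := by
    simp only [BB, of_apply]
    conv_lhs => rw [← hmp.map_eq]
    rw [integral_map hmp.measurable.aemeasurable, ← integral_neg]
    · refine integral_congr_ae ?_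
      filter_upwards with g
      rw [h1, hn.neg_pow, Matrix.neg_apply]
    · rw [hmp.map_eq]
      exact (integrable_pow_entry F n i j).aestronglyMeasurable
  simp only [Matrix.zero_apply]
  linarith
end
section
variable {m ν ι c : Type} [Fintype m] [DecidableEq m] [Fintype ν] [DecidableEq ν] [Fintype ι] [DecidableEq ι] 

lemma BB_fam [Nonempty ν] (A : ι → Matrix m m ℝ) (θ : ℝ) (n : ℕ) :
    ∃ S : Matrix m m ℝ, BB (fam θ (tens A (Hd ν)) (tens A (Ho ν))) n = kronecker S (1 : Matrix ν ν ℝ) := by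
  set F := fam θ (tens A (Hd ν)) (tens A (Ho ν)) with hF
  set a0 : ν := Classical.arbitrary ν
  refine ⟨Matrix.of fun i j => BB F n (i, a0) (j, a0), ?_⟩
  ext ⟨i, a⟩ ⟨j, b⟩
  simp only [kronecker, kroneckerMap_apply, of_apply, one_apply]
  split_ifs with hab
  · subst hab
    rw [mul_one]
    set π : ν ≃ ν := Equiv.swap a a0 with hπ
    have hinv : ∀ x y, x = π y ↔ π x = y := by
      intro x y
      rw [← Equiv.eq_symm_apply, hπ, Equiv.symm_swap]
    have := BB_sub F (Equiv.sumCongr ((Equiv.refl ι).prodCongr π) ((Equiv.refl ι).prodCongr (π.prodCongr π))) ((Equiv.refl m).prodCongr π) ?_ n (i, a) (j, a)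
    · simpa [hπ] using this.symm
    · rintro (⟨i, c⟩ | ⟨i, c1, c2⟩)
      · ext ⟨x, p⟩ ⟨y, q⟩
        simp [hF, fam, tens, kronecker, Hd, single_apply, hinv]
      · ext ⟨x, p⟩ ⟨y, q⟩
        simp [hF, fam, tens, kronecker, Ho, single_apply, hinv]
  · rw [mul_zero]
    set ε : ν → ℝ := fun x => if x = a then -1 else 1 with hε
    have hε2 : ∀ x, ε x = 1 ∨ ε x = -1 := by intro x; simp only [hε]; split_ifs <;> simp
    have hε3 : ∀ x, ε x * ε x = 1 := by intro x; rcases hε2 x with h | h <;> simp [h]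
    have := BB_sign F (Sum.elim (fun _ => 1) (fun p => ε p.2.1 * ε p.2.2)) ?_ (fun x => ε x.2) (fun x => hε3 x.2) ?_ n (i, a) (j, b)
    · simp [hε, Ne.symm hab] at this
      linarith
    · rintro (⟨i, c⟩ | ⟨i, c1, c2⟩)
      · simp
      · rcases hε2 c1 with h | h <;> rcases hε2 c2 with h' | h' <;> simp [h, h']
    · rintro (⟨i, c⟩ | ⟨i, c1, c2⟩) ⟨x, p⟩ ⟨y, q⟩
      · simp only [hF, fam, tens, kronecker, Hd, single_apply, Sum.elim_inl, Matrix.smul_apply, kroneckerMap_apply, 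
          Matrix.add_apply, smul_eq_mul]
        by_cases h1 : c = p ∧ c = q
        · obtain ⟨rfl, rfl⟩ := h1
          simp only [and_self, if_true]
          linear_combination (Real.cos θ * A i x y) * hε3 c
        · simp [h1]
      · simp only [hF, fam, tens, kronecker, Ho, single_apply, Sum.elim_inr, Matrix.smul_apply, kroneckerMap_apply, 
         Matrix.add_apply, smul_eq_mul]
        by_cases h1 : c1 = p ∧ c2 = q
        · obtain ⟨rfl, rfl⟩ := h1
          ring
        · by_cases h2 : c2 = p ∧ c1 = q
          · obtain ⟨rfl, rfl⟩ := h2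
            ring
          · simp [h1, h2]

lemma dec_same [Fintype c] (A : ι → Matrix m m ℝ) {H : c → Matrix ν ν ℝ} {h : ℝ} (hH : HH H h) (S T : Matrix m m ℝ) :
    ∑ j, trace (tens A H j * kronecker S 1 * tens A H j * kronecker T 1) =
      ∑ i, trace (A i * S * A i * T) * Fintype.card ν := by
  have : ∀ j, trace (tens A H j * kronecker S 1 * tens A H j * kronecker T 1) = trace (A j.1 * S * A j.1 * T) * trace (H j.2 * H j.2) := by
    intro j
    rw [← trace_kronecker]
    simp only [tens, kronecker, ← mul_kronecker_mul, Matrix.mul_one]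
  simp only [this]
  rw [Fintype.sum_prod_type]
  refine Finset.sum_congr rfl fun i _ => ?_
  dsimp only
  rw [← Finset.mul_sum, ← trace_sum, hH.one, trace_one]
end
end PartFile12

section PartFile13
open MeasureTheory ProbabilityTheory Matrix
set_option linter.unusedSectionVars false
set_option linter.unusedSimpArgs false
section
variable {m κ : Type} [Fintype m] [DecidableEq m] [Fintype κ] [DecidableEq κ] 

lemma integrable_trace_gX (F : κ → Matrix m m ℝ) (n : ℕ) : Integrable (fun g => trace (gX F g ^ n)) (gpi κ) := by
  simp only [trace, diag]
  exact integrable_finsetSum _ fun i _ => integrable_pow_entry F n i i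

lemma trace_even_nonneg (X : Matrix m m ℝ) (hX : Xᵀ = X) (n : ℕ) (hn : Even n) : 0 ≤ trace (X ^ n) := by
  obtain ⟨U, l, h1, h2, h3⟩ := exists_spec X hX
  rw [h3, trace_spec U _ h2]
  exact Finset.sum_nonneg fun a _ => hn.pow_nonneg _

lemma scalar_pow_le (x s : ℝ) (hx : 0 ≤ x) (hs : 0 ≤ s) (n : ℕ) : x ^ n * s ^ 4 ≤ x ^ (n + 4) + s ^ (n + 4) := by
  rw [pow_add, pow_add]
  rcases le_total x s with h | h
  · have := mul_le_mul_of_nonneg_right (pow_le_pow_left₀ hx h n) (pow_nonneg hs 4)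
    have : 0 ≤ x ^ n * x ^ 4 := by positivity
    linarith
  · have := mul_le_mul_of_nonneg_left (pow_le_pow_left₀ hs h 4) (pow_nonneg hx n)
    have : 0 ≤ s ^ n * s ^ 4 := by positivity
    linarith

lemma trace_pow_interp (X : Matrix m m ℝ) (hX : Xᵀ = X) (n : ℕ) (hn : Even n) (s : ℝ) (hs : 0 ≤ s) : 
    trace (X ^ n) * s ^ 4 ≤ trace (X ^ (n + 4)) + Fintype.card m * s ^ (n + 4) := by
  obtain ⟨U, l, h1, h2, h3⟩ := exists_spec X hX
  rw [h3, trace_spec U _ h2, h3, trace_spec U _ h2, Finset.sum_mul]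
  have : ∀ a, l a ^ n * s ^ 4 ≤ l a ^ (n + 4) + s ^ (n + 4) := by
    intro a
    have := scalar_pow_le |l a| s (abs_nonneg _) hs n
    rwa [hn.pow_abs, (hn.add (by decide : Even 4)).pow_abs] at this
  refine (Finset.sum_le_sum fun a _ => this a).trans (le_of_eq ?_)
  rw [Finset.sum_add_distrib]
  simp

lemma int_interp (F : κ → Matrix m m ℝ) (hF : ∀ k, (F k)ᵀ = F k) (n : ℕ) (hn : Even n) (s : ℝ) (hs : 0 ≤ s) : 
    (∫ g, trace (gX F g ^ n) ∂(gpi κ)) * s ^ 4 ≤ (∫ g, trace (gX F g ^ (n + 4)) ∂(gpi κ)) + Fintype.card m * s ^ (n + 4) := by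
  rw [← integral_mul_const]
  have : (∫ g, trace (gX F g ^ (n + 4)) ∂(gpi κ)) + Fintype.card m * s ^ (n + 4) = 
    ∫ g, (trace (gX F g ^ (n + 4)) + Fintype.card m * s ^ (n + 4)) ∂(gpi κ) := by
    rw [integral_add (integrable_trace_gX F _) (integrable_const _)]
    simp
  rw [this]
  refine integral_mono ((integrable_trace_gX F _).mul_const _) ((integrable_trace_gX F _).add (integrable_const _)) fun g => ?_
  exact trace_pow_interp _ (gX_symm F hF g) n hn s hs

end
section
variable {m ν ι : Type} [Fintype m] [DecidableEq m] [Fintype ν] [DecidableEq ν] [Fintype ι] [DecidableEq ι] 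

lemma M_zero (A : ι → Matrix m m ℝ) (n : ℕ) : 
    ∫ g, trace (gX (fam 0 (tens A (Hd ν)) (tens A (Ho ν))) g ^ n) ∂(gpi _) = 
      Fintype.card ν * ∫ g, trace (gX A g ^ n) ∂(gpi ι) := by
  have h1 : ∀ g : (ι × ν) ⊕ (ι × (ν × ν)) → ℝ, gX (fam 0 (tens A (Hd ν)) (tens A (Ho ν))) g =
      blockDiagonal (fun a => gX A (fun i => g (Sum.inl (i, a)))) := by
    intro g
    ext ⟨i, a⟩ ⟨j, b⟩
    simp only [gX, fam, tens, Hd, kronecker, Fintype.sum_sum_type, Fintype.sum_prod_type, Sum.elim_inl, Sum.elim_inr,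
      Real.cos_zero, Real.sin_zero, one_smul, zero_smul, smul_zero, Finset.sum_const_zero, add_zero, Matrix.sum_apply,
      Matrix.smul_apply, kroneckerMap_apply, single_apply, blockDiagonal_apply, smul_eq_mul, ite_and, mul_ite, mul_one, mul_zero]
    simp only [Finset.sum_ite_eq', Finset.sum_ite_eq, Finset.mem_univ, if_true]
    split_ifs <;> simp
  have h2 : ∀ g : (ι × ν) ⊕ (ι × (ν × ν)) → ℝ, trace (gX (fam 0 (tens A (Hd ν)) (tens A (Ho ν))) g ^ n) = 
     ∑ a, trace (gX A (fun i => g (Sum.inl (i, a))) ^ n) := by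
    intro g
    rw [h1, ← blockDiagonal_pow, trace_blockDiagonal]
    rfl
  simp only [h2]
  have hmp : ∀ a : ν, MeasurePreserving (fun (g : (ι × ν) ⊕ (ι × (ν × ν)) → ℝ) (i : ι) => g (Sum.inl (i, a))) (gpi _) (gpi ι) := by
    intro a
    exact gpi_map_inj (fun i => Sum.inl (i, a)) (fun i j h => by simpa using h)
  have hintgr : ∀ a : ν, Integrable (fun (g : (ι × ν) ⊕ (ι × (ν × ν)) → ℝ) => trace (gX A (fun i => g (Sum.inl (i, a))) ^ n)) (gpi _) := by
    intro a
    exact (hmp a).integrable_comp_of_integrable (integrable_trace_gX A n)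
  rw [integral_finsetSum _ fun a _ => hintgr a]
  have : ∀ a, ∫ (g : (ι × ν) ⊕ (ι × (ν × ν)) → ℝ), trace (gX A (fun i => g (Sum.inl (i, a))) ^ n) ∂(gpi _) = ∫ g, trace (gX A g ^ n) ∂(gpi ι) := by
    intro a
    rw [← (hmp a).map_eq, integral_map (hmp a).measurable.aemeasurable]
    rw [(hmp a).map_eq]
    exact (integrable_trace_gX A n).aestronglyMeasurable
  simp [this]

lemma M_pi (A : ι → Matrix m m ℝ) (n : ℕ) : 
    ∫ g, trace (gX (fam (Real.pi / 2) (tens A (Hd ν)) (tens A (Ho ν))) g ^ n) ∂(gpi _) = 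
      ∫ g, trace (gX (tens A (Ho ν)) g ^ n) ∂(gpi _) := by
  have h1 : ∀ g : (ι × ν) ⊕ (ι × (ν × ν)) → ℝ, gX (fam (Real.pi / 2) (tens A (Hd ν)) (tens A (Ho ν))) g =
      gX (tens A (Ho ν)) (fun i => g (Sum.inr i)) := by
    intro g
    simp [gX, fam]
  simp only [h1]
  have hmp := gpi_map_inj (Sum.inr : (ι × (ν × ν)) → (ι × ν) ⊕ (ι × (ν × ν))) Sum.inr_injective
  rw [← hmp.map_eq, integral_map hmp.measurable.aemeasurable]
  rw [hmp.map_eq]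
  exact (integrable_trace_gX _ n).aestronglyMeasurable

lemma Ho_le [Nonempty ν] {A : ι → Matrix m m ℝ} {v σ : ℝ} (hA : HP A v σ) : HP (tens A (Ho ν)) v σ := by
  refine (tens_HP hA Ho_HH).mono ?_
  have : (1:ℝ) ≤ Fintype.card ν := by exact_mod_cast Fintype.card_pos
  refine mul_le_of_le_one_right hA.hv0 ?_
  rw [Real.sqrt_le_iff, one_pow, div_le_one (by positivity)]
  exact ⟨zero_le_one, by linarith⟩

lemma phase1_bound [Nonempty ν] {A : ι → Matrix m m ℝ} {v σ : ℝ} (hA : HP A v σ) (q : ℕ) (s : ℝ) (hs : 0 ≤ s)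
    (hq : ((q : ℝ) + 2) ^ 3 * v ^ 2 * σ ^ 2 ≤ s ^ 4) (θ : ℝ) :
    |((2 * q + 3 : ℕ) + 1) * (Real.sin θ * Real.cos θ) * ∑ i ∈ Finset.range (2 * q + 3),
        (∫ g, ∑ γ, trace (tens A (Ho ν) γ * gX (fam θ (tens A (Hd ν)) (tens A (Ho ν))) g ^ i * tens A (Ho ν) γ * gX (fam θ (tens A (Hd ν)) (tens A (Ho ν))) g ^ (2 * q + 3 - 1 - i)) ∂(gpi _) -
         ∫ g, ∑ γ, trace (tens A (Hd ν) γ * gX (fam θ (tens A (Hd ν)) (tens A (Ho ν))) g ^ i * tens A (Hd ν) γ * gX (fam θ (tens A (Hd ν)) (tens A (Ho ν))) g ^ (2 * q + 3 - 1 - i)) ∂(gpi _))| ≤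
      64 * (q + 2) * (∫ g, trace (gX (fam θ (tens A (Hd ν)) (tens A (Ho ν))) g ^ (2 * q + 3 + 1)) ∂(gpi _) + 
         Fintype.card (m × ν) * s ^ (2 * q + 4)) := by
  have hP : HP (tens A (Hd ν)) v σ := by simpa using tens_HP hA (Hd_HH (ν := ν))
  have hQ : HP (tens A (Ho ν)) v σ := Ho_le hA
  set F := fam θ (tens A (Hd ν)) (tens A (Ho ν)) with hF
  have hFF : HP F v σ := fam_HP hP hQ θ
  set I := ∫ g, trace (gX F g ^ (2 * q)) ∂(gpi _) with hI
  have hI0 : 0 ≤ I := integral_nonneg fun g => trace_even_nonneg _ (gX_symm F hFF.symm g) _ (even_two_mul q)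
  have hterm : ∀ i ∈ Finset.range (2 * q + 3), |∫ g, ∑ γ, trace (tens A (Ho ν) γ * gX F g ^ i * tens A (Ho ν) γ * gX F g ^ (2 * q + 3 - 1 - i)) ∂(gpi _) -
         ∫ g, ∑ γ, trace (tens A (Hd ν) γ * gX F g ^ i * tens A (Hd ν) γ * gX F g ^ (2 * q + 3 - 1 - i)) ∂(gpi _)| ≤ 
         16 * ((q + 2) ^ 2 * (v ^ 2 * σ ^ 2 * I)) := by
    intro i hi
    have hi' := Finset.mem_range.1 hi
    have d1 := dec_trace hQ hFF i (2 * q + 3 - 1 - i) (2 * q) (by omega) (even_two_mul q)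
    have d2 := dec_trace hP hFF i (2 * q + 3 - 1 - i) (2 * q) (by omega) (even_two_mul q)
    obtain ⟨S, hS⟩ := BB_fam (ν := ν) A θ i
    obtain ⟨T, hT⟩ := BB_fam (ν := ν) A θ (2 * q + 3 - 1 - i)
    rw [← hF] at hS hT
    rw [hS, hT, dec_same A Ho_HH] at d1
    rw [hS, hT, dec_same A Hd_HH] at d2
    have hkl : (i : ℝ) * ((2 * q + 3 - 1 - i : ℕ) : ℝ) ≤ (q + 2) ^ 2 := by
      have : ((2 * q + 3 - 1 - i : ℕ) : ℝ) = 2 * q + 2 - i := by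
        rw [show 2 * q + 3 - 1 - i = 2 * q + 2 - i by omega, Nat.cast_sub (by omega)]
        push_cast; ring
      rw [this]
      nlinarith [sq_nonneg ((i : ℝ) - q - 1)]
    have hb : Real.pi / 2 * (i * ((2 * q + 3 - 1 - i : ℕ) : ℝ) * (v * σ * (v * σ) * (4 * I))) ≤ 8 * ((q + 2) ^ 2 * (v ^ 2 * σ ^ 2 * I)) := by
      have hπ := Real.pi_le_four
      have h0 : 0 ≤ v ^ 2 * σ ^ 2 * I := by positivity
      calc _ = (Real.pi / 2 * 4) * ((i * ((2 * q + 3 - 1 - i : ℕ) : ℝ)) * (v ^ 2 * σ ^ 2 * I)) := by ring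
        _ ≤ 8 * ((q + 2) ^ 2 * (v ^ 2 * σ ^ 2 * I)) := by
          gcongr
          linarith
    rw [abs_le] at *
    constructor <;> linarith [d1.1, d1.2, d2.1, d2.2]
  have hsum := (Finset.abs_sum_le_sum_abs _ _).trans (Finset.sum_le_sum hterm)
  rw [Finset.sum_const, Finset.card_range, nsmul_eq_mul] at hsum
  have hsc : |Real.sin θ * Real.cos θ| ≤ 1 := by
    rw [abs_mul]
    exact mul_le_one₀ (Real.abs_sin_le_one θ) (abs_nonneg _) (Real.abs_cos_le_one θ)
  have hintgr := int_interp F hFF.symm (2 * q) (even_two_mul q) s hs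
  rw [abs_mul, abs_mul]
  have hc : |(((2 * q + 3 : ℕ) : ℝ) + 1)| = 2 * (q + 2) := by
    rw [abs_of_nonneg (by positivity)]; push_cast; ring
  rw [hc]
  calc _ ≤ 2 * ((q:ℝ) + 2) * 1 * (((2 * q + 3 : ℕ) : ℝ) * (16 * ((q + 2) ^ 2 * (v ^ 2 * σ ^ 2 * I)))) := by
        gcongr
    _ ≤ 2 * ((q:ℝ) + 2) * 1 * ((2 * (q + 2)) * (16 * ((q + 2) ^ 2 * (v ^ 2 * σ ^ 2 * I)))) := by
        gcongr
        push_cast; linarith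
    _ = 64 * (q + 2) * (I * (((q : ℝ) + 2) ^ 3 * v ^ 2 * σ ^ 2)) := by ring
    _ ≤ 64 * (q + 2) * (I * s ^ 4) := by gcongr
    _ ≤ _ := by gcongr

lemma phase1 [Nonempty ν] {A : ι → Matrix m m ℝ} {v σ : ℝ} (hA : HP A v σ) (q : ℕ) (s : ℝ) (hs : 0 ≤ s)
    (hq : ((q : ℝ) + 2) ^ 3 * v ^ 2 * σ ^ 2 ≤ s ^ 4) : 
    Fintype.card ν * (∫ g, trace (gX A g ^ (2 * q + 4)) ∂(gpi ι)) ≤ 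
     Real.exp (128 * (q + 2)) * (∫ g, trace (gX (tens A (Ho ν)) g ^ (2 * q + 4)) ∂(gpi _) + Fintype.card (m × ν) * s ^ (2 * q + 4)) := by
  set f : ℝ → ℝ := fun t => ∫ g, trace (gX (fam t (tens A (Hd ν)) (tens A (Ho ν))) g ^ (2 * q + 3 + 1)) ∂(gpi _) with hf
  have hder := fun θ => phase1_deriv (tens A (Hd ν)) (tens A (Ho ν)) (2 * q + 3) θ
  have hbd := phase1_bound (ν := ν) hA q s hs hq
  set L : ℝ := 64 * (q + 2) with hL
  set D : ℝ := Fintype.card (m × ν) * s ^ (2 * q + 4) with hD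
  have hh : ∀ θ, HasDerivAt (fun t => (f t + D) * Real.exp (L * t)) 
      (_ * Real.exp (L * θ) + (f θ + D) * (Real.exp (L * θ) * (L * 1))) θ := fun θ =>
    ((hder θ).add_const D).mul (((hasDerivAt_id' θ).const_mul L).exp)
  have hmono : Monotone (fun t => (f t + D) * Real.exp (L * t)) := by
    refine monotone_of_deriv_nonneg (fun θ => (hh θ).differentiableAt) fun θ => ?_
    rw [(hh θ).deriv]
    have := (abs_le.1 (hbd θ)).1
    have he := Real.exp_pos (L * θ)
    have h3 := mul_le_mul_of_nonneg_right this he.le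
    change -(L * (f θ + D)) * _ ≤ _ at h3
    linarith
  have := hmono (show (0:ℝ) ≤ Real.pi / 2 by positivity)
  simp only [mul_zero, Real.exp_zero, mul_one] at this
  have h0 : f 0 = _ := M_zero (ν := ν) A (2 * q + 4)
  have h1 : f (Real.pi / 2) = _ := M_pi (ν := ν) A (2 * q + 4)
  rw [h0, h1] at this
  have hD0 : 0 ≤ D := by positivity
  have hfin : 0 ≤ ∫ g, trace (gX (tens A (Ho ν)) g ^ (2 * q + 4)) ∂(gpi _) + D := by
    refine add_nonneg (integral_nonneg fun g => trace_even_nonneg _ (gX_symm _ (Ho_le hA).symm g) _ ?_) hD0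
    exact ⟨q + 2, by ring⟩
  calc _ ≤ (Fintype.card ν * (∫ g, trace (gX A g ^ (2 * q + 4)) ∂(gpi ι))) + D := by linarith
    _ ≤ _ := this
    _ ≤ _ := by
      rw [mul_comm]
      refine mul_le_mul_of_nonneg_right (Real.exp_le_exp.2 ?_) hfin
      have hπ := Real.pi_le_four
      rw [hL]
      nlinarith
end
end PartFile13

section PartFile14
open MeasureTheory ProbabilityTheory Matrix
set_option linter.unusedSectionVars false
set_option linter.unusedSimpArgs false
section
variable {m κ : Type} [Fintype m] [DecidableEq m] [Fintype κ] [DecidableEq κ] 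

noncomputable def crude : ℕ → ℝ
  | 0 => 1
  | n + 1 => (2 * n + 1) * 4 * crude n

lemma crude_nonneg (n : ℕ) : 0 ≤ crude n := by
  induction n with
  | zero => simp [crude]
  | succ n ih => rw [crude]; positivity

lemma dot_self_nonneg (x : m → ℝ) : 0 ≤ x ⬝ᵥ x := Finset.sum_nonneg fun _ _ => mul_self_nonneg _

variable {F : κ → Matrix m m ℝ} {w σ : ℝ}

lemma crude_bound (hF : HP F w σ) (n : ℕ) :
    ∫ g, trace (gX F g ^ (2 * n)) ∂(gpi κ) ≤ crude n * σ ^ (2 * n) * Fintype.card m := by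
  induction n with
  | zero => simp [crude]
  | succ n ih =>
    have h := ibp_pow F (2 * n + 1) 1
    simp only [Matrix.mul_one] at h
    rw [show 2 * (n + 1) = 2 * n + 1 + 1 by ring, h]
    have h1 : ∀ i ∈ Finset.range (2 * n + 1), ∫ g, ∑ k, trace (F k * gX F g ^ i * F k * gX F g ^ (2 * n + 1 - 1 - i)) ∂(gpi κ) ≤
        4 * σ ^ 2 * (crude n * σ ^ (2 * n) * Fintype.card m) := by
      intro i hi
      have hi' := Finset.mem_range.1 hi
      refine le_trans ?_ (mul_le_mul_of_nonneg_left ih (by positivity))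
      rw [← integral_const_mul]
      refine integral_mono ?_ ((integrable_trace_gX F _).const_mul _) fun g => ?_
      · refine integrable_finsetSum _ fun k _ => ?_
        have := integrable_trace_ev (fun _ => 0) (cm (F k) * PX F ^ i * cm (F k) * PX F ^ (2 * n + 1 - 1 - i))
        simpa only [map_mul, map_pow, ev_cm, ev_PX] using this
      · exact (le_abs_self _).trans (khin_trace hF _ (gX_symm F hF.symm g) i (2 * n + 1 - 1 - i) (2 * n) (by omega) (even_two_mul n))
    refine (Finset.sum_le_sum h1).trans (le_of_eq ?_)
    rw [Finset.sum_const, Finset.card_range, nsmul_eq_mul, crude]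
    push_cast
    ring

def Bl (B : Matrix m m ℝ) (b : ℝ) : Prop := ∀ x y : m → ℝ, |x ⬝ᵥ (B *ᵥ y)| ≤ b * (√(x ⬝ᵥ x) * √(y ⬝ᵥ y))

lemma Bl.vec {B : Matrix m m ℝ} {b : ℝ} (h : Bl B b) (hb : 0 ≤ b) (y : m → ℝ) :
    √((B *ᵥ y) ⬝ᵥ (B *ᵥ y)) ≤ b * √(y ⬝ᵥ y) := by
  have h1 := (le_abs_self _).trans (h (B *ᵥ y) y)
  rcases (Real.sqrt_nonneg ((B *ᵥ y) ⬝ᵥ (B *ᵥ y))).eq_or_lt with h0 | h0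
  · rw [← h0]; positivity
  · have h2 : √((B *ᵥ y) ⬝ᵥ (B *ᵥ y)) * √((B *ᵥ y) ⬝ᵥ (B *ᵥ y)) = (B *ᵥ y) ⬝ᵥ (B *ᵥ y) := Real.mul_self_sqrt (dot_self_nonneg _)
    refine le_of_mul_le_mul_left ?_ h0
    rw [h2]
    refine h1.trans (le_of_eq (by ring))

lemma HP.sqrt_bd (hF : HP F w σ) (x : m → ℝ) : √(∑ j, (F j *ᵥ x) ⬝ᵥ (F j *ᵥ x)) ≤ σ * √(x ⬝ᵥ x) := by
  refine (Real.sqrt_le_sqrt (hF.hs x)).trans (le_of_eq ?_)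
  rw [Real.sqrt_mul (sq_nonneg _), Real.sqrt_sq hF.hs0]

lemma Bl_mid (hF : HP F w σ) {B B' : Matrix m m ℝ} {b b' : ℝ} (h : Bl B b) (hb : 0 ≤ b) (h' : Bl B' b') (hb' : 0 ≤ b')
    (x y : m → ℝ) : |∑ j, x ⬝ᵥ ((F j * B * F j * B') *ᵥ y)| ≤ σ ^ 2 * (b * b') * (√(x ⬝ᵥ x) * √(y ⬝ᵥ y)) := by
  set z := B' *ᵥ y with hz
  have e : ∀ j, x ⬝ᵥ ((F j * B * F j * B') *ᵥ y) = (F j *ᵥ x) ⬝ᵥ (B *ᵥ (F j *ᵥ z)) := by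
    intro j
    rw [← mulVec_mulVec, ← mulVec_mulVec, ← mulVec_mulVec, ← hz, dotProduct_mulVec, ← mulVec_transpose, hF.symm]
  simp only [e]
  have hzl := h'.vec hb' y
  rw [← hz] at hzl
  calc _ ≤ ∑ j, |(F j *ᵥ x) ⬝ᵥ (B *ᵥ (F j *ᵥ z))| := Finset.abs_sum_le_sum_abs _ _
    _ ≤ ∑ j, b * (√((F j *ᵥ x) ⬝ᵥ (F j *ᵥ x)) * √((F j *ᵥ z) ⬝ᵥ (F j *ᵥ z))) := Finset.sum_le_sum fun j _ => h _ _
    _ ≤ b * (√(∑ j, (F j *ᵥ x) ⬝ᵥ (F j *ᵥ x)) * √(∑ j, (F j *ᵥ z) ⬝ᵥ (F j *ᵥ z))) := by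
      rw [← Finset.mul_sum]
      exact mul_le_mul_of_nonneg_left (Real.sum_sqrt_mul_sqrt_le _ (fun j => dot_self_nonneg _) (fun j => dot_self_nonneg _)) hb
    _ ≤ b * ((σ * √(x ⬝ᵥ x)) * (σ * (b' * √(y ⬝ᵥ y)))) := by
      have := hF.hs0
      gcongr
      · exact hF.sqrt_bd x
      · exact (hF.sqrt_bd z).trans (mul_le_mul_of_nonneg_left hzl this)
    _ = _ := by ring

lemma sum_even (f : ℕ → ℝ) (hf : ∀ i, Odd i → f i = 0) (k : ℕ) :
    ∑ i ∈ Finset.range (2 * k + 1), f i = ∑ a ∈ Finset.range (k + 1), f (2 * a) := by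
  induction k with
  | zero => simp
  | succ k ih =>
    rw [show 2 * (k + 1) + 1 = 2 * k + 1 + 1 + 1 by ring, Finset.sum_range_succ, Finset.sum_range_succ, ih, hf (2 * k + 1) (odd_two_mul_add_one k),
      Finset.sum_range_succ _ (k + 1), add_zero]
    rfl

lemma BB_dot (F : κ → Matrix m m ℝ) (k : ℕ) (x y : m → ℝ) :
    x ⬝ᵥ (BB F k *ᵥ y) = ∫ g, x ⬝ᵥ (gX F g ^ k *ᵥ y) ∂(gpi κ) := by
  simp only [dotProduct, mulVec, BB, of_apply, Finset.mul_sum]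
  have hi : ∀ i j, Integrable (fun g => x i * ((gX F g ^ k) i j * y j)) (gpi κ) := fun i j =>
    ((integrable_pow_entry F k i j).mul_const _).const_mul _
  rw [integral_finsetSum _ fun i _ => integrable_finsetSum _ fun j _ => hi i j]
  refine Finset.sum_congr rfl fun i _ => ?_
  rw [integral_finsetSum _ fun j _ => hi i j]
  refine Finset.sum_congr rfl fun j _ => ?_
  rw [integral_const_mul, integral_mul_const]

lemma BB_zero (F : κ → Matrix m m ℝ) : BB F 0 = 1 := by
  ext i j
  simp [BB]

lemma Bl_one : Bl (1 : Matrix m m ℝ) 1 := by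
  intro x y
  rw [one_mulVec, one_mul, ← Real.sqrt_mul (dot_self_nonneg _), ← Real.sqrt_sq_eq_abs]
  refine Real.sqrt_le_sqrt ?_
  have := Finset.sum_mul_sq_le_sq_mul_sq Finset.univ x y
  simpa [dotProduct, sq] using this

noncomputable def Kst (k : ℕ) : ℝ := (2 * k + 1) * (2 * ((2 * k) * (2 * k) * (1 + 2 * crude (2 * (k - 1)))))

lemma BB_step [Nonempty m] (hF : HP F w σ) (hσ : 0 < σ) (k : ℕ) (hk : Kst k * (w ^ 2 * √(Fintype.card m)) ≤ σ ^ 2) 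
    (b : ℕ → ℝ) (hb0 : ∀ a, 0 ≤ b a) (hb : ∀ a ≤ k, Bl (BB F (2 * a)) (b a)) :
    Bl (BB F (2 * (k + 1))) (σ ^ 2 * (∑ a ∈ Finset.range (k + 1), b a * b (k - a)) + if k = 0 then 0 else σ ^ 2 * σ ^ (2 * k)) := by
  intro x y
  set r := √(x ⬝ᵥ x) * √(y ⬝ᵥ y) with hr
  have hr0 : 0 ≤ r := by positivity
  have h := ibp_pow F (2 * k + 1) (vecMulVec y x)
  simp only [trace_vecMulVec'] at h
  rw [BB_dot, show 2 * (k + 1) = 2 * k + 1 + 1 by ring, h]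
  set f : ℕ → ℝ := fun i => ∑ j, x ⬝ᵥ ((F j * BB F i * F j * BB F (2 * k + 1 - 1 - i)) *ᵥ y) with hf
  have hfo : ∀ i, Odd i → f i = 0 := by
    intro i hi
    simp [hf, BB_odd F i hi]
  have hfs : |∑ i ∈ Finset.range (2 * k + 1), f i| ≤ σ ^ 2 * (∑ a ∈ Finset.range (k + 1), b a * b (k - a)) * r := by
    rw [sum_even f hfo]
    refine (Finset.abs_sum_le_sum_abs _ _).trans ?_
    rw [Finset.mul_sum, Finset.sum_mul]
    refine Finset.sum_le_sum fun a ha => ?_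
    have ha' := Finset.mem_range.1 ha
    have := Bl_mid hF (hb a (by omega)) (hb0 _) (hb (k - a) (by omega)) (hb0 _) x y
    rw [show 2 * (k - a) = 2 * k + 1 - 1 - 2 * a by omega] at this
    exact this
  rcases k with _ | j
  · simp only [mul_zero, zero_add, Finset.range_one, Finset.sum_singleton, pow_zero, Nat.sub_self, Matrix.mul_one, if_true, add_zero, integral_const, 
      hf, BB_zero] at hfs ⊢
    simpa using hfs
  · set t := √(Fintype.card m) * σ ^ (2 * j) with ht
    have hcard : (0:ℝ) < Fintype.card m := by exact_mod_cast Fintype.card_pos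
    have ht0 : 0 < t := by positivity
    have hdiff : ∀ i ∈ Finset.range (2 * (j + 1) + 1), |∫ g, ∑ k, x ⬝ᵥ ((F k * gX F g ^ i * F k * gX F g ^ (2 * (j + 1) + 1 - 1 - i)) *ᵥ y) ∂(gpi κ) - f i| ≤ 
        2 * ((2 * (j + 1)) * (2 * (j + 1)) * (1 + 2 * crude (2 * j))) * (w ^ 2 * √(Fintype.card m)) * σ ^ (2 * (j + 1)) * r := by
      intro i hi
      have hi' := Finset.mem_range.1 hi
      have h1 := dec_vec hF hF i (2 * (j + 1) + 1 - 1 - i) (2 * j) (by omega) x y t ht0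
      refine h1.trans ?_
      have h2 : t + 2 * (∫ g, trace (gX F g ^ (2 * (2 * j))) ∂(gpi κ)) / t ≤ t * (1 + 2 * crude (2 * j)) := by
        have h3 := crude_bound hF (2 * j)
        have h4 : crude (2 * j) * σ ^ (2 * (2 * j)) * Fintype.card m = crude (2 * j) * (t * t) := by
          rw [ht]
          have : √(Fintype.card m : ℝ) * √(Fintype.card m : ℝ) = Fintype.card m := Real.mul_self_sqrt hcard.le
          rw [show 2 * (2 * j) = 2 * j + 2 * j by ring, pow_add]
          linear_combination (- crude (2 * j) * σ ^ (2 * j) * σ ^ (2 * j)) * this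
        rw [h4] at h3
        have h5 : 2 * (∫ g, trace (gX F g ^ (2 * (2 * j))) ∂(gpi κ)) / t ≤ 2 * crude (2 * j) * t := by
          rw [div_le_iff₀ ht0]
          linarith
        linarith
      have hil : (i : ℝ) ≤ 2 * (j + 1) := by exact_mod_cast (by omega : i ≤ 2 * (j + 1))
      have hll : ((2 * (j + 1) + 1 - 1 - i : ℕ) : ℝ) ≤ 2 * (j + 1) := by exact_mod_cast (by omega : 2 * (j + 1) + 1 - 1 - i ≤ 2 * (j + 1))
      have hπ := Real.pi_le_four
      have hw := hF.hv0
      have hT : 0 ≤ t + 2 * (∫ g, trace (gX F g ^ (2 * (2 * j))) ∂(gpi κ)) / t := by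
        have : 0 ≤ ∫ g, trace (gX F g ^ (2 * (2 * j))) ∂(gpi κ) := integral_nonneg fun g => trace_even_nonneg _ (gX_symm F hF.symm g) _ (even_two_mul _)
        positivity
      calc _ ≤ 2 * ((2 * (j + 1)) * (2 * (j + 1)) * (w * σ * (w * σ) * r * (t * (1 + 2 * crude (2 * j))))) := by
            gcongr
            linarith
        _ = _ := by rw [ht]; ring
    have hsum : |∑ i ∈ Finset.range (2 * (j + 1) + 1), ∫ g, ∑ k, x ⬝ᵥ ((F k * gX F g ^ i * F k * gX F g ^ (2 * (j + 1) + 1 - 1 - i)) *ᵥ y) ∂(gpi κ) - ∑ i ∈ Finset.range (2 * (j + 1) + 1), f i| ≤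
        σ ^ 2 * σ ^ (2 * (j + 1)) * r := by
      rw [← Finset.sum_sub_distrib]
      refine (Finset.abs_sum_le_sum_abs _ _).trans ((Finset.sum_le_sum hdiff).trans ?_)
      rw [Finset.sum_const, Finset.card_range, nsmul_eq_mul]
      calc _ = (Kst (j + 1) * (w ^ 2 * √(Fintype.card m))) * σ ^ (2 * (j + 1)) * r := by
            rw [Kst]
            simp only [Nat.add_sub_cancel]
            push_cast
            ring
        _ ≤ _ := by gcongr
    rw [if_neg (by omega), add_mul]
    have := abs_add_le (∑ i ∈ Finset.range (2 * (j + 1) + 1), ∫ g, ∑ k, x ⬝ᵥ ((F k * gX F g ^ i * F k * gX F g ^ (2 * (j + 1) + 1 - 1 - i)) *ᵥ y) ∂(gpi κ) - ∑ i ∈ Finset.range (2 * (j + 1) + 1), f i) (∑ i ∈ Finset.range (2 * (j + 1) + 1), f i)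
    rw [sub_add_cancel] at this
    linarith

lemma Bl.mono {B : Matrix m m ℝ} {b b' : ℝ} (h : Bl B b) (hb : b ≤ b') : Bl B b' := fun x y =>
  (h x y).trans (mul_le_mul_of_nonneg_right hb (by positivity))

lemma BB_cat [Nonempty m] (hF : HP F w σ) (hσ : 0 < σ) (p : ℕ) (hp : ∀ k < p, Kst k * (w ^ 2 * √(Fintype.card m)) ≤ σ ^ 2) :
    ∀ k ≤ p, Bl (BB F (2 * k)) (catalan k * (2 * σ ^ 2) ^ k) := by
  intro k
  induction k using Nat.strong_induction_on with
  | _ k ih =>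
    intro hk
    rcases k with _ | k
    · simp only [mul_zero, BB_zero, catalan_zero, pow_zero, Nat.cast_one, mul_one]
      exact Bl_one
    · have h := BB_step hF hσ k (hp k (by omega)) (fun a => catalan a * (2 * σ ^ 2) ^ a) (fun a => by positivity)
        (fun a ha => ih a (by omega) (by omega))
      refine h.mono ?_
      have h1 : ∑ a ∈ Finset.range (k + 1), ((catalan a : ℝ) * (2 * σ ^ 2) ^ a) * ((catalan (k - a) : ℝ) * (2 * σ ^ 2) ^ (k - a)) = 
         catalan (k + 1) * (2 * σ ^ 2) ^ k := by
        rw [catalan_succ]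
        push_cast
        rw [Finset.sum_range, Finset.sum_mul]
        refine Finset.sum_congr rfl fun a _ => ?_
        have : (2 * σ ^ 2) ^ k = (2 * σ ^ 2) ^ (a : ℕ) * (2 * σ ^ 2) ^ (k - a) := by
          rw [← pow_add]; congr 1; omega
        rw [this]; ring
      simp only [h1]
      have hc : (1 : ℝ) ≤ catalan (k + 1) := by
        have : 0 < catalan (k + 1) := by
          have h3 := succ_mul_catalan_eq_centralBinom (k + 1)
          have h4 := Nat.centralBinom_pos (k + 1)
          rw [← h3] at h4
          exact Nat.pos_of_mul_pos_left h4
        exact_mod_cast this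
      have h2 : (if k = 0 then 0 else σ ^ 2 * σ ^ (2 * k)) ≤ σ ^ 2 * (catalan (k + 1) * (2 * σ ^ 2) ^ k) := by
        split_ifs
        · positivity
        · rw [mul_pow, ← pow_mul]
          refine mul_le_mul_of_nonneg_left ?_ (by positivity)
          calc σ ^ (2 * k) = 1 * (1 * σ ^ (2 * k)) := by ring
            _ ≤ _ := by
              gcongr
              exact one_le_pow₀ (by norm_num)
      refine (add_le_add_right h2 _).trans (le_of_eq ?_)
      ring

lemma phase2 [Nonempty m] (hF : HP F w σ) (hσ : 0 < σ) (p : ℕ) (hp : ∀ k < p, Kst k * (w ^ 2 * √(Fintype.card m)) ≤ σ ^ 2) :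
    ∫ g, trace (gX F g ^ (2 * p)) ∂(gpi κ) ≤ Fintype.card m * (8 * σ ^ 2) ^ p := by
  have h := BB_cat hF hσ p hp p le_rfl
  have h1 : ∫ g, trace (gX F g ^ (2 * p)) ∂(gpi κ) = ∑ i, BB F (2 * p) i i := by
    simp only [trace, diag]
    rw [integral_finsetSum _ fun i _ => integrable_pow_entry F (2 * p) i i]
    rfl
  have hcat : (catalan p : ℝ) ≤ 4 ^ p := by
    have : catalan p ≤ 4 ^ p := by
      rw [catalan_eq_centralBinom_div]
      refine (Nat.div_le_self _ _).trans ?_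
      rw [Nat.centralBinom, show 4 = 2 ^ 2 by norm_num, ← pow_mul]
      exact Nat.choose_le_two_pow _ _
    exact_mod_cast this
  have h2 : ∀ i, BB F (2 * p) i i ≤ (8 * σ ^ 2) ^ p := by
    intro i
    have h3 := (le_abs_self _).trans (h (Pi.single i 1) (Pi.single i 1))
    simp at h3
    refine h3.trans ?_
    calc _ ≤ 4 ^ p * (2 * σ ^ 2) ^ p := by gcongr
      _ = _ := by rw [← mul_pow]; ring
  rw [h1]
  refine (Finset.sum_le_sum fun i _ => h2 i).trans (le_of_eq ?_)
  simp
end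
end PartFile14

section PartFile15
open MeasureTheory ProbabilityTheory Matrix
set_option linter.unusedSectionVars false
set_option linter.unusedSimpArgs false
section
lemma quad_le {m : Type} [Fintype m] [DecidableEq m] (M : Matrix m m ℝ) (x : m → ℝ) : x ⬝ᵥ (M *ᵥ x) ≤ opNorm M * (x ⬝ᵥ x) := by
  set T := LinearMap.toContinuousLinearMap (Matrix.toEuclideanLin M) with hT
  set e : EuclideanSpace ℝ m := WithLp.toLp 2 x with he
  have h1 := T.le_opNorm e
  have h2 := real_inner_le_norm e (T e)
  have h3 : inner ℝ e (T e) = x ⬝ᵥ (M *ᵥ x) := by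
    simp [hT, he, EuclideanSpace.inner_eq_star_dotProduct, dotProduct_comm]
  have h4 : ‖e‖ * ‖e‖ = x ⬝ᵥ x := by
    rw [← real_inner_self_eq_norm_mul_norm, EuclideanSpace.inner_eq_star_dotProduct]
    simp [he]
  rw [← h3, ← h4]
  refine h2.trans ?_
  calc _ ≤ ‖e‖ * (‖T‖ * ‖e‖) := by gcongr
    _ = _ := by rw [opNorm]; ring
lemma opNorm_le {m : Type} [Fintype m] [DecidableEq m] (M : Matrix m m ℝ) (ρ : ℝ) (hρ : 0 ≤ ρ) 
   (h : ∀ y, √((M *ᵥ y) ⬝ᵥ (M *ᵥ y)) ≤ ρ * √(y ⬝ᵥ y)) : opNorm M ≤ ρ := by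
  refine ContinuousLinearMap.opNorm_le_bound _ hρ fun x => ?_
  have := h (WithLp.ofLp x)
  have h4 : ∀ e : EuclideanSpace ℝ m, ‖e‖ = √(WithLp.ofLp e ⬝ᵥ WithLp.ofLp e) := by
    intro e
    rw [EuclideanSpace.norm_eq]
    simp [dotProduct, sq]
  rw [h4, h4]
  simpa using this

lemma HP_of {n d : ℕ} (A : Fin n → Matrix (Fin d) (Fin d) ℝ) (hA : ∀ i, (A i).IsSymm) : HP A (vX A) (sigmaX A) where
  symm := hA
  hv0 := Real.sqrt_nonneg _
  hs0 := Real.sqrt_nonneg _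
  hv B := by
    have h := quad_le (covX A) (fun p => B p.1 p.2)
    have hn : 0 ≤ opNorm (covX A) := norm_nonneg _
    rw [vX, Real.sq_sqrt hn]
    have e1 : (fun p : Fin d × Fin d => B p.1 p.2) ⬝ᵥ (fun p => B p.1 p.2) = frobNormSq B := by
      simp [dotProduct, frobNormSq, Fintype.sum_prod_type, sq]
    have e2 : (fun p : Fin d × Fin d => B p.1 p.2) ⬝ᵥ (covX A *ᵥ (fun p => B p.1 p.2)) = ∑ j, (∑ a, ∑ b, A j a b * B a b) ^ 2 := by
      rw [covX, sum_mulVec, dotProduct_sum]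
      refine Finset.sum_congr rfl fun j _ => ?_
      rw [← Fintype.sum_prod_type' (f := fun a b => A j a b * B a b), sq, Finset.sum_mul_sum]
      simp only [dotProduct, mulVec, of_apply, Finset.mul_sum]
      refine Finset.sum_congr rfl fun p _ => Finset.sum_congr rfl fun q _ => ?_
      ring
    rw [e1, e2] at h
    exact h
  hs x := by
    have h := quad_le (∑ i, A i * A i) x
    have hn : 0 ≤ opNorm (∑ i, A i * A i) := norm_nonneg _
    rw [sigmaX, Real.sq_sqrt hn]
    refine le_trans (le_of_eq ?_) h
    rw [sum_mulVec, dotProduct_sum]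
    refine Finset.sum_congr rfl fun j _ => ?_
    rw [← mulVec_mulVec, dotProduct_mulVec, dotProduct_mulVec, ← mulVec_transpose, ← mulVec_transpose, hA j, dotProduct_comm,
      dotProduct_mulVec, ← mulVec_transpose, hA j]

lemma le_one_add_pow (x : ℝ) (hx : 0 ≤ x) (n : ℕ) (hn : n ≠ 0) : x ≤ 1 + x ^ n := by
  rcases le_total x 1 with h | h
  · have := pow_nonneg hx n
    linarith
  · have := le_self_pow₀ h hn
    linarith

lemma opNorm_trace {m : Type} [Fintype m] [DecidableEq m] (X : Matrix m m ℝ) (hX : Xᵀ = X) (n : ℕ) (hn : Even n) (hn0 : n ≠ 0)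
    (t : ℝ) (ht : 0 < t) : opNorm X ≤ t * (1 + trace (X ^ n) / t ^ n) := by
  obtain ⟨U, l, h1, h2, h3⟩ := exists_spec X hX
  have htr : trace (X ^ n) = ∑ a, l a ^ n := by rw [h3, trace_spec U _ h2]
  have h0 : 0 ≤ t * (1 + trace (X ^ n) / t ^ n) := by
    have := trace_even_nonneg X hX n hn
    positivity
  refine opNorm_le X _ h0 fun y => ?_
  have := vec_pow_le X hX U l h1 h2 h3 (t * (1 + trace (X ^ n) / t ^ n)) ?_ 1 y h0
  · simpa using this
  · intro a
    have h4 := le_one_add_pow (|l a| / t) (by positivity) n hn0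
    rw [div_le_iff₀ ht, div_pow, hn.pow_abs] at h4
    refine h4.trans ?_
    rw [mul_comm]
    have : l a ^ n ≤ trace (X ^ n) := by
      rw [htr]
      exact Finset.single_le_sum (f := fun a => l a ^ n) (fun _ _ => hn.pow_nonneg _) (Finset.mem_univ a)
    gcongr

lemma Kst_nonneg (k : ℕ) : 0 ≤ Kst k := by
  have := crude_nonneg (2 * (k - 1))
  unfold Kst
  positivity

lemma moment {m ι : Type} [Fintype m] [DecidableEq m] [Nonempty m] [Fintype ι] [DecidableEq ι] {A : ι → Matrix m m ℝ} {v σ : ℝ}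
    (hA : HP A v σ) (hσ : 0 < σ) (q : ℕ) (s : ℝ) (hs : 0 ≤ s) (hq : ((q : ℝ) + 2) ^ 3 * v ^ 2 * σ ^ 2 ≤ s ^ 4) :
    ∫ g, trace (gX A g ^ (2 * q + 4)) ∂(gpi ι) ≤ 
      Real.exp (128 * (q + 2)) * (Fintype.card m * ((8 * σ ^ 2) ^ (q + 2) + s ^ (2 * q + 4))) := by
  set K := ∑ k ∈ Finset.range (q + 2), Kst k with hK
  have hK0 : 0 ≤ K := Finset.sum_nonneg fun k _ => Kst_nonneg k
  set c : ℝ := K * (v ^ 2 * 2 * √(Fintype.card m)) / σ ^ 2 with hc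
  have hc0 : 0 ≤ c := by positivity
  obtain ⟨N0, hN0⟩ := exists_nat_ge (c ^ 2)
  set N := N0 + 1 with hN
  have hNr : (N : ℝ) = N0 + 1 := by rw [hN]; push_cast; rfl
  have hNc : c ≤ √N := by
    refine Real.le_sqrt_of_sq_le ?_
    rw [hNr]; linarith
  have hNpos : (0:ℝ) < N := by rw [hNr]; positivity
  have : Nonempty (Fin N) := ⟨0⟩
  have h1 := phase1 (ν := Fin N) hA q s hs hq
  have hQ := tens_HP hA (Ho_HH (ν := Fin N))
  have h2 := phase2 hQ hσ (q + 2) ?_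
  · rw [show 2 * (q + 2) = 2 * q + 4 by ring] at h2
    have h3 := h1.trans (mul_le_mul_of_nonneg_left (add_le_add_left h2 _) (Real.exp_pos _).le)
    simp only [Fintype.card_fin, Fintype.card_prod] at h3
    push_cast at h3
    refine le_of_mul_le_mul_left (h3.trans (le_of_eq ?_)) hNpos
    ring
  · intro k hk
    have hkK : Kst k ≤ K := Finset.single_le_sum (fun k _ => Kst_nonneg k) (Finset.mem_range.2 hk)
    simp only [Fintype.card_fin, Fintype.card_prod]
    push_cast
    rw [mul_pow, Real.sq_sqrt (by positivity), Real.sqrt_mul (by positivity)]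
    have hsN : √(N : ℝ) * √(N : ℝ) = N := Real.mul_self_sqrt hNpos.le
    have hsp : 0 < √(N : ℝ) := Real.sqrt_pos.2 hNpos
    calc _ ≤ K * (v ^ 2 * (2 / N) * (√(Fintype.card m) * √N)) := by
          have : (2:ℝ) / (N + 1) ≤ 2 / N := by
            gcongr
            linarith
          gcongr
      _ = c * σ ^ 2 * (√N / N) := by
          rw [hc]; field_simp
      _ ≤ √N * σ ^ 2 * (√N / N) := by gcongr
      _ = σ ^ 2 := by
          rw [show √(N:ℝ) * σ ^ 2 * (√N / N) = σ ^ 2 * (√N * √N) / N by ring, hsN]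
          field_simp

lemma HP_zero {m ι : Type} [Fintype m] [DecidableEq m] [Fintype ι] {A : ι → Matrix m m ℝ} {v : ℝ}
    (hA : HP A v 0) (i : ι) : A i = 0 := by
  have h : ∀ x, (A i *ᵥ x) = 0 := by
    intro x
    have h1 := hA.hs x
    have h2 : (A i *ᵥ x) ⬝ᵥ (A i *ᵥ x) ≤ ∑ j, (A j *ᵥ x) ⬝ᵥ (A j *ᵥ x) :=
      Finset.single_le_sum (f := fun j => (A j *ᵥ x) ⬝ᵥ (A j *ᵥ x)) (fun _ _ => dot_self_nonneg _) (Finset.mem_univ i)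
    have h3 := dot_self_nonneg (A i *ᵥ x)
    have : (A i *ᵥ x) ⬝ᵥ (A i *ᵥ x) = 0 := by
      simp at h1
      linarith
    exact dotProduct_self_eq_zero.1 this
  ext a b
  have := congrFun (h (Pi.single b 1)) a
  simpa using this

lemma main_bound (n d : ℕ) (hd : 2 ≤ d) (A : Fin n → Matrix (Fin d) (Fin d) ℝ) (hA : ∀ i, (A i).IsSymm) :
    (∫ g, opNorm (∑ i, g i • A i) ∂(gaussianPi n)) ≤
          (324 * Real.exp 65) * (sigmaX A + (Real.log d) ^ ((3 : ℝ) / 2) * vX A) := by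
  have hHP := HP_of A hA
  set σ := sigmaX A with hσd
  set v := vX A with hvd
  have hd2 : (2:ℝ) ≤ d := by exact_mod_cast hd
  have hlog2 : Real.log 2 ≤ Real.log d := Real.log_le_log (by norm_num) hd2
  have hl2 := Real.log_two_gt_d9
  have hlog0 : 0 < Real.log d := by linarith
  have hv0 : 0 ≤ v := hHP.hv0
  have hLv : 0 ≤ (Real.log d) ^ ((3 : ℝ) / 2) * v := by positivity
  rcases hHP.hs0.eq_or_lt with h0 | hσ
  · rw [← h0] at hHP
    have hz := HP_zero hHP
    have : ∀ g : Fin n → ℝ, opNorm (∑ i, g i • A i) = 0 := by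
      intro g
      simp [hz, opNorm]
    simp only [this, integral_zero]
    rw [← h0]
    positivity
  set q : ℕ := ⌈Real.log d⌉₊ with hq
  set r : ℝ := ((q : ℝ) + 2) ^ ((3:ℝ) / 2) with hr
  have hr0 : 0 ≤ r := by positivity
  have hr2 : r ^ 2 = ((q : ℝ) + 2) ^ 3 := by
    rw [hr, ← Real.rpow_natCast, ← Real.rpow_mul (by positivity), ← Real.rpow_natCast]
    norm_num
  set s := σ + r * v with hs
  have hrv : 0 ≤ r * v := by positivity
  have hs0 : 0 < s := by positivity
  have hsσ : σ ≤ s := by linarith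
  have hq4 : ((q : ℝ) + 2) ^ 3 * v ^ 2 * σ ^ 2 ≤ s ^ 4 := by
    rw [← hr2]
    have h1 : r * v * σ ≤ s ^ 2 := by
      have : r * v * σ ≤ s * s := mul_le_mul (by linarith) hsσ hσ.le hs0.le
      linarith [sq s]
    calc _ = (r * v * σ) ^ 2 := by ring
      _ ≤ (s ^ 2) ^ 2 := by gcongr
      _ = _ := by ring
  have : Nonempty (Fin d) := ⟨⟨0, by omega⟩⟩
  have hmom := moment hHP hσ q s hs0.le hq4
  have hqlog : Real.log d ≤ q := Nat.le_ceil _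
  have hdexp : (d : ℝ) ≤ Real.exp (q + 2) := by
    rw [← Real.exp_log (by linarith : (0:ℝ) < d)]
    exact Real.exp_le_exp.2 (by linarith)
  set t := 3 * Real.exp 65 * s with ht
  have ht0 : 0 < t := by positivity
  have hmom2 : ∫ g, trace (gX A g ^ (2 * q + 4)) ∂(gpi (Fin n)) ≤ 2 * t ^ (2 * q + 4) := by
    refine hmom.trans ?_
    rw [Fintype.card_fin]
    have e1 : (8 * σ ^ 2) ^ (q + 2) ≤ (3 * s) ^ (2 * q + 4) := by
      rw [show 2 * q + 4 = 2 * (q + 2) by ring, pow_mul (3 * s)]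
      refine pow_le_pow_left₀ (by positivity) ?_ _
      nlinarith
    have e2 : s ^ (2 * q + 4) ≤ (3 * s) ^ (2 * q + 4) := pow_le_pow_left₀ hs0.le (by linarith) _
    have e3 : Real.exp (128 * (q + 2)) * Real.exp (q + 2) ≤ (Real.exp 65) ^ (2 * q + 4) := by
      rw [← Real.exp_add, ← Real.exp_nat_mul]
      refine Real.exp_le_exp.2 ?_
      push_cast
      have : (0:ℝ) ≤ q := by positivity
      nlinarith
    calc _ ≤ Real.exp (128 * (q + 2)) * (Real.exp (q + 2) * ((3 * s) ^ (2 * q + 4) + (3 * s) ^ (2 * q + 4))) := by gcongr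
      _ = (Real.exp (128 * (q + 2)) * Real.exp (q + 2)) * (2 * (3 * s) ^ (2 * q + 4)) := by ring
      _ ≤ (Real.exp 65) ^ (2 * q + 4) * (2 * (3 * s) ^ (2 * q + 4)) := by gcongr
      _ = _ := by rw [ht, mul_pow, mul_pow, mul_pow]; ring
  have hmain : (∫ g, opNorm (∑ i, g i • A i) ∂(gaussianPi n)) ≤ 3 * t := by
    have h1 : (∫ g, opNorm (∑ i, g i • A i) ∂(gpi (Fin n))) ≤ ∫ g, t * (1 + trace (gX A g ^ (2 * q + 4)) / t ^ (2 * q + 4)) ∂(gpi (Fin n)) := by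
      refine integral_mono_of_nonneg (Filter.Eventually.of_forall fun g => norm_nonneg _) ?_ (Filter.Eventually.of_forall fun g => ?_)
      · exact (((integrable_const _).add ((integrable_trace_gX A _).div_const _)).const_mul _)
      · exact opNorm_trace _ (gX_symm A hHP.symm g) _ ⟨q + 2, by ring⟩ (by omega) t ht0
    refine h1.trans ?_
    rw [integral_const_mul, integral_add (integrable_const _) ((integrable_trace_gX A _).div_const _), integral_div]
    have h2 : (∫ g, trace (gX A g ^ (2 * q + 4)) ∂(gpi (Fin n))) / t ^ (2 * q + 4) ≤ 2 := by
      rw [div_le_iff₀ (by positivity)]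
      exact hmom2
    simp only [integral_const, probReal_univ, smul_eq_mul, mul_one]
    nlinarith
  refine hmain.trans ?_
  have hrle : r ≤ 36 * (Real.log d) ^ ((3 : ℝ) / 2) := by
    have h1 : (q : ℝ) + 2 ≤ 6 * Real.log d := by
      have := (Nat.ceil_lt_add_one hlog0.le).le
      rw [← hq] at this
      linarith
    calc r ≤ (6 * Real.log d) ^ ((3:ℝ) / 2) := Real.rpow_le_rpow (by positivity) h1 (by norm_num)
      _ = 6 ^ ((3:ℝ) / 2) * (Real.log d) ^ ((3:ℝ) / 2) := Real.mul_rpow (by norm_num) hlog0.le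
      _ ≤ 36 * (Real.log d) ^ ((3 : ℝ) / 2) := by
        gcongr
        calc (6:ℝ) ^ ((3:ℝ) / 2) ≤ 6 ^ (2:ℝ) := Real.rpow_le_rpow_of_exponent_le (by norm_num) (by norm_num)
          _ = 36 := by norm_num
  have hsle : s ≤ 36 * (σ + (Real.log d) ^ ((3 : ℝ) / 2) * v) := by
    have := mul_le_mul_of_nonneg_right hrle hv0
    rw [hs]
    linarith
  calc 3 * t = 9 * Real.exp 65 * s := by rw [ht]; ring
    _ ≤ 9 * Real.exp 65 * (36 * (σ + (Real.log d) ^ ((3 : ℝ) / 2) * v)) := by gcongr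
    _ = _ := by ring
end
end PartFile15

/-- **Theorem 2.1, "in particular" form.** There is a universal constant `C > 0` such
that for all positive integers `n` and `d ≥ 2` and symmetric matrices
`A 1, …, A n ∈ ℝ^{d×d}`, the Gaussian random matrix `X = ∑ g i • A i` satisfies
`𝔼[‖X‖_op] ≤ C (σ(X) + (log d)^{3/2} v(X))`. -/
theorem bbvh_matrix_concentration_weak :
    ∃ C : ℝ, 0 < C ∧ ∀ (n d : ℕ), 0 < n → 2 ≤ d →
      ∀ A : Fin n → Matrix (Fin d) (Fin d) ℝ, (∀ i, (A i).IsSymm) →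
        (∫ g, opNorm (∑ i, g i • A i) ∂(gaussianPi n)) ≤
          C * (sigmaX A + (Real.log d) ^ ((3 : ℝ) / 2) * vX A) := by
  exact ⟨324 * Real.exp 65, by positivity, fun n d _ hd A hA => main_bound n d hd A hA⟩
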